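/- arXiv:1007.4488 — 9 statements merged into one kernel-verified Lean document; each statement's English description precedes it below -/
import Mathlib

section
/- Let H₁ and H₂ be complex Hilbert spaces and A a closed, densely defined linear operator from H₁ to H₂ with Hilbert-space adjoint A*. Define R = I + A*A with domain Dom(R) = {x ∈ Dom A : Ax ∈ Dom A*}, and S = I + AA* with domain Dom(S) = {x ∈ Dom A* : A*x ∈ Dom A}. Then R : Dom(R) → H₁ and S : Dom(S) → H₂ are bijective linear maps, and their inverses R⁻¹ : H₁ → H₁ and S⁻¹ : H₂ → H₂ are continuous (bounded) self-adjoint operators. -/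
open scoped LinearPMap

theorem aux_inv {E F : Type*} [NormedAddCommGroup E] [InnerProductSpace ℂ E] [CompleteSpace E]
    [NormedAddCommGroup F] [InnerProductSpace ℂ F]
    (T : E →ₗ.[ℂ] F) (S : F →ₗ.[ℂ] E) (h : T.IsFormalAdjoint S)
    (hs : ∀ y : E, ∃ x : E, ∃ (hx : x ∈ T.domain) (hAx : T ⟨x, hx⟩ ∈ S.domain),
        x + S ⟨T ⟨x, hx⟩, hAx⟩ = y) :
    (∀ y : E, ∃! x : E, ∃ (hx : x ∈ T.domain) (hAx : T ⟨x, hx⟩ ∈ S.domain),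
        x + S ⟨T ⟨x, hx⟩, hAx⟩ = y) ∧
    (∃ Rinv : E →L[ℂ] E, IsSelfAdjoint Rinv ∧
      ∀ y : E, ∃ (hx : Rinv y ∈ T.domain) (hAx : T ⟨Rinv y, hx⟩ ∈ S.domain),
        Rinv y + S ⟨T ⟨Rinv y, hx⟩, hAx⟩ = y) := by
  have key : ∀ x y x' y' : E,
      (∃ (hx : x ∈ T.domain) (hAx : T ⟨x, hx⟩ ∈ S.domain), x + S ⟨T ⟨x, hx⟩, hAx⟩ = y) →
      (∃ (hx : x' ∈ T.domain) (hAx : T ⟨x', hx⟩ ∈ S.domain), x' + S ⟨T ⟨x', hx⟩, hAx⟩ = y') →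
      inner ℂ x y' = inner ℂ y x' := by
    rintro x y x' y' ⟨hx, hAx, rfl⟩ ⟨hx', hAx', rfl⟩
    have h1 := h ⟨x, hx⟩ ⟨_, hAx'⟩
    have h2 := h.symm ⟨_, hAx⟩ ⟨x', hx'⟩
    simp only at h1 h2
    rw [inner_add_right, inner_add_left, ← h1, h2]
  have bound : ∀ x y : E,
      (∃ (hx : x ∈ T.domain) (hAx : T ⟨x, hx⟩ ∈ S.domain), x + S ⟨T ⟨x, hx⟩, hAx⟩ = y) →
      ‖x‖ ≤ ‖y‖ := by
    rintro x y ⟨hx, hAx, hy⟩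
    have h1 := h ⟨x, hx⟩ ⟨_, hAx⟩
    simp only at h1
    have h2 : inner ℂ x y = inner ℂ x x + inner ℂ (T ⟨x, hx⟩) (T ⟨x, hx⟩) := by
      rw [← hy, inner_add_right, ← h1]
    have h3 := congrArg Complex.re h2
    have e1 : (inner ℂ x x).re = ‖x‖ ^ 2 := by
      simpa using inner_self_eq_norm_sq (𝕜 := ℂ) x
    have e2 : (inner ℂ (T ⟨x, hx⟩) (T ⟨x, hx⟩)).re = ‖T ⟨x, hx⟩‖ ^ 2 := by
      simpa using inner_self_eq_norm_sq (𝕜 := ℂ) (T ⟨x, hx⟩)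
    rw [Complex.add_re, e1, e2] at h3
    have h4 : (inner ℂ x y).re ≤ ‖x‖ * ‖y‖ := by
      simpa using re_inner_le_norm (𝕜 := ℂ) x y
    by_contra hc
    push Not at hc
    nlinarith [sq_nonneg ‖T ⟨x, hx⟩‖, norm_nonneg x, norm_nonneg y]
  refine ⟨?_, ?_⟩
  · intro y
    obtain ⟨x, hx⟩ := hs y
    refine ⟨x, hx, fun x' hx' => ?_⟩
    refine ext_inner_right ℂ fun v => ?_
    obtain ⟨w, hw⟩ := hs v
    rw [key _ _ _ _ hx' hw, key _ _ _ _ hx hw]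
  · choose f hf using hs
    have sym : ∀ a b, inner ℂ (f a) b = inner ℂ a (f b) := fun a b =>
      key _ _ _ _ (hf a) (hf b)
    let L : E →ₗ[ℂ] E :=
      { toFun := f
        map_add' := fun a b => ext_inner_right ℂ fun v => by
          simp only [inner_add_left, sym]
        map_smul' := fun c a => ext_inner_right ℂ fun v => by
          simp only [inner_smul_left, sym, RingHom.id_apply] }
    refine ⟨L.mkContinuous 1 fun y => ?_, ?_, fun y => hf y⟩
    · rw [one_mul]
      exact bound _ _ (hf y)
    · rw [ContinuousLinearMap.isSelfAdjoint_iff_isSymmetric]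
      exact fun a b => sym a b

theorem aux_dec {E F : Type*} [NormedAddCommGroup E] [InnerProductSpace ℂ E] [CompleteSpace E]
    [NormedAddCommGroup F] [InnerProductSpace ℂ F] [CompleteSpace F]
    (A : E →ₗ.[ℂ] F) (hAd : Dense (A.domain : Set E)) (hAc : A.IsClosed) (u : E) (v : F) :
    ∃ (x : A.domain) (y : (A†).domain), (x : E) - A† y = u ∧ A x + y = v := by
  let G : Submodule ℂ (WithLp 2 (E × F)) :=
    A.graph.comap (WithLp.linearEquiv 2 ℂ (E × F)).toLinearMap
  have hG : IsClosed (G : Set (WithLp 2 (E × F))) :=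
    IsClosed.preimage (WithLp.prod_continuous_ofLp 2 E F) hAc
  haveI : CompleteSpace G := hG.completeSpace_coe
  obtain ⟨g, hg, k, hk, hgk⟩ := G.exists_add_mem_mem_orthogonal (WithLp.toLp 2 (u, v))
  have hg' : g.ofLp ∈ A.graph := hg
  rw [LinearPMap.mem_graph_iff] at hg'
  obtain ⟨x, hx1, hx2⟩ := hg'
  have hk' : ∀ a : A.domain, inner ℂ (-k.fst) (a : E) = inner ℂ k.snd (A a) := by
    intro a
    have hm : WithLp.toLp 2 ((a : E), A a) ∈ G := A.mem_graph a
    have := (Submodule.mem_orthogonal' _ _).1 hk _ hm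
    rw [WithLp.prod_inner_apply] at this
    rw [inner_neg_left]
    exact neg_eq_of_add_eq_zero_right this
  have hy : k.snd ∈ (A†).domain := LinearPMap.mem_adjoint_domain_of_exists _ ⟨_, hk'⟩
  have hy2 : A† ⟨k.snd, hy⟩ = -k.fst := LinearPMap.adjoint_apply_eq hAd _ hk'
  refine ⟨x, ⟨k.snd, hy⟩, ?_, ?_⟩
  · rw [hy2, hx1, sub_neg_eq_add]
    exact (congrArg (fun z => z.fst) hgk).symm
  · rw [hx2]
    exact (congrArg (fun z => z.snd) hgk).symm

/-- **Von Neumann's lemma.** For a closed densely defined operator `A` between complex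
Hilbert spaces, `R = I + A*A` (with domain `{x ∈ Dom A : Ax ∈ Dom A*}`) and
`S = I + AA*` (with domain `{x ∈ Dom A* : A*x ∈ Dom A}`) are bijective onto `H₁`
resp. `H₂`, and their inverses are bounded self-adjoint operators. -/
theorem stmt_0 {H₁ H₂ : Type*} [NormedAddCommGroup H₁] [InnerProductSpace ℂ H₁] [CompleteSpace H₁]
    [NormedAddCommGroup H₂] [InnerProductSpace ℂ H₂] [CompleteSpace H₂]
    (A : H₁ →ₗ.[ℂ] H₂) (hAd : Dense (A.domain : Set H₁)) (hAc : A.IsClosed) :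
    (∀ y : H₁, ∃! x : H₁, ∃ (hx : x ∈ A.domain) (hAx : A ⟨x, hx⟩ ∈ (A†).domain),
        x + A† ⟨A ⟨x, hx⟩, hAx⟩ = y) ∧
    (∀ y : H₂, ∃! x : H₂, ∃ (hx : x ∈ (A†).domain) (hAx : A† ⟨x, hx⟩ ∈ A.domain),
        x + A ⟨A† ⟨x, hx⟩, hAx⟩ = y) ∧
    (∃ Rinv : H₁ →L[ℂ] H₁, IsSelfAdjoint Rinv ∧
      ∀ y : H₁, ∃ (hx : Rinv y ∈ A.domain) (hAx : A ⟨Rinv y, hx⟩ ∈ (A†).domain),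
        Rinv y + A† ⟨A ⟨Rinv y, hx⟩, hAx⟩ = y) ∧
    (∃ Sinv : H₂ →L[ℂ] H₂, IsSelfAdjoint Sinv ∧
      ∀ y : H₂, ∃ (hx : Sinv y ∈ (A†).domain) (hAx : A† ⟨Sinv y, hx⟩ ∈ A.domain),
        Sinv y + A ⟨A† ⟨Sinv y, hx⟩, hAx⟩ = y) := by
  have hF := LinearPMap.adjoint_isFormalAdjoint hAd
  have h1 := aux_inv A (A†) hF.symm (fun y => by
    obtain ⟨x, z, h1, h2⟩ := aux_dec A hAd hAc y 0
    have hz : A x = ((-z : (A†).domain) : H₂) := by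
      rw [eq_neg_of_add_eq_zero_left h2]; rfl
    have hm : A x ∈ (A†).domain := hz ▸ (-z).2
    refine ⟨x, x.2, hm, ?_⟩
    have : (⟨A x, hm⟩ : (A†).domain) = -z := Subtype.ext hz
    change (x : H₁) + A† ⟨A x, hm⟩ = y
    rw [this, LinearPMap.map_neg, ← sub_eq_add_neg, h1])
  have h2 := aux_inv (A†) A hF (fun y => by
    obtain ⟨x, z, h1, h2⟩ := aux_dec A hAd hAc 0 y
    have hz : A† z = x := (sub_eq_zero.1 h1).symm
    have hm : A† z ∈ A.domain := hz ▸ x.2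
    refine ⟨z, z.2, hm, ?_⟩
    have : (⟨A† z, hm⟩ : A.domain) = x := Subtype.ext hz
    change (z : H₂) + A ⟨A† z, hm⟩ = y
    rw [this, add_comm, h2])
  exact ⟨h1.1, h2.1, h1.2, h2.2⟩
end

section
/- Let S := (I + TT*)⁻¹ + (I + T*T)⁻¹ − I, where (I + TT*)⁻¹ and (I + T*T)⁻¹ are the bounded self-adjoint inverses furnished by von Neumann's lemma. Then S is a bounded self-adjoint operator on H, the range of S is contained in Dom P, and (I + P)S = I on H; in particular I + P : Dom P → H is bijective with bounded inverse S. -/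
open scoped LinearPMap

/-- With `B = (I + TT*)⁻¹` and `C = (I + T*T)⁻¹` the bounded self-adjoint inverses furnished by
von Neumann's lemma, `S := B + C - I` is a bounded self-adjoint operator whose range is contained
in `Dom P` and which satisfies `(I + P)S = I`; in particular `I + P : Dom P → H` is bijective
with bounded inverse `S`. -/
theorem stmt_2 {H : Type*} [NormedAddCommGroup H] [InnerProductSpace ℂ H] [CompleteSpace H]
    (T : H →ₗ.[ℂ] H) (hTd : Dense (T.domain : Set H)) (hTc : T.IsClosed)
    (hTr : ∀ u : T.domain, T u ∈ T.domain)
    (hT2 : ∀ u : T.domain, T ⟨T u, hTr u⟩ = 0)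
    (P : H →ₗ.[ℂ] H)
    (hPdom : ∀ x : H, x ∈ P.domain ↔
      ∃ (h1 : x ∈ T.domain) (h2 : x ∈ (T†).domain),
        T ⟨x, h1⟩ ∈ (T†).domain ∧ T† ⟨x, h2⟩ ∈ T.domain)
    (hPval : ∀ (x : H) (hx : x ∈ P.domain) (h1 : x ∈ T.domain) (h2 : x ∈ (T†).domain)
      (h3 : T ⟨x, h1⟩ ∈ (T†).domain) (h4 : T† ⟨x, h2⟩ ∈ T.domain),
      P ⟨x, hx⟩ = T† ⟨T ⟨x, h1⟩, h3⟩ + T ⟨T† ⟨x, h2⟩, h4⟩)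
    -- `B` is the bounded self-adjoint inverse of `I + TT*`
    (B : H →L[ℂ] H) (hBsa : IsSelfAdjoint B)
    (hB : ∀ y : H, ∃ (h1 : B y ∈ (T†).domain) (h2 : T† ⟨B y, h1⟩ ∈ T.domain),
      B y + T ⟨T† ⟨B y, h1⟩, h2⟩ = y)
    -- `C` is the bounded self-adjoint inverse of `I + T*T`
    (C : H →L[ℂ] H) (hCsa : IsSelfAdjoint C)
    (hC : ∀ y : H, ∃ (h1 : C y ∈ T.domain) (h2 : T ⟨C y, h1⟩ ∈ (T†).domain),
      C y + T† ⟨T ⟨C y, h1⟩, h2⟩ = y) :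
    IsSelfAdjoint (B + C - 1) ∧
    (∀ y : H, ∃ h : (B + C - 1) y ∈ P.domain,
      (B + C - 1) y + P ⟨(B + C - 1) y, h⟩ = y) ∧
    (∀ y : H, ∃! x : H, ∃ hx : x ∈ P.domain, x + P ⟨x, hx⟩ = y) := by
  have hF := LinearPMap.adjoint_isFormalAdjoint (T := T) hTd
  have hcongr : ∀ (A : H →ₗ.[ℂ] H) (a b : H) (ha : a ∈ A.domain) (hb : b ∈ A.domain),
      a = b → A ⟨a, ha⟩ = A ⟨b, hb⟩ := by
    intro A a b ha hb h
    subst h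
    rfl
  have hsub : ∀ (A : H →ₗ.[ℂ] H) (a b : H) (ha : a ∈ A.domain) (hb : b ∈ A.domain)
      (h : a - b ∈ A.domain), A ⟨a - b, h⟩ = A ⟨a, ha⟩ - A ⟨b, hb⟩ := by
    intro A a b ha hb h
    rw [← LinearPMap.map_sub]
    rfl
  have hadj0 : ∀ u : (T†).domain, ∀ x : T.domain, inner ℂ (0 : H) (x : H) = inner ℂ (T† u) (T x) := by
    intro u x
    have h := hF u ⟨T x, hTr x⟩
    rw [hT2 x] at h
    simpa using h.symm
  have hSr : ∀ u : (T†).domain, T† u ∈ (T†).domain := fun u =>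
    LinearPMap.mem_adjoint_domain_of_exists _ ⟨0, hadj0 u⟩
  have hS2 : ∀ u : (T†).domain, T† ⟨T† u, hSr u⟩ = 0 := fun u =>
    LinearPMap.adjoint_apply_eq hTd _ (hadj0 u)
  have key : ∀ y : H, ∃ h : (B + C - 1) y ∈ P.domain,
      (B + C - 1) y + P ⟨(B + C - 1) y, h⟩ = y := by
    intro y
    obtain ⟨b1, b2, hb⟩ := hB y
    obtain ⟨c1, c2, hc⟩ := hC y
    have e0 : (B + C - 1) y = B y + C y - y := by simp
    have e1 : (B + C - 1) y = C y - T ⟨T† ⟨B y, b1⟩, b2⟩ := by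
      rw [e0, eq_sub_of_add_eq' hb]; abel
    have e2 : (B + C - 1) y = B y - T† ⟨T ⟨C y, c1⟩, c2⟩ := by
      rw [e0, eq_sub_of_add_eq' hc]; abel
    generalize (B + C - 1) y = s at *
    have m1' : C y - T ⟨T† ⟨B y, b1⟩, b2⟩ ∈ T.domain := T.domain.sub_mem c1 (hTr _)
    have m2' : B y - T† ⟨T ⟨C y, c1⟩, c2⟩ ∈ (T†).domain := (T†).domain.sub_mem b1 (hSr _)
    have m1 : s ∈ T.domain := e1 ▸ m1'
    have m2 : s ∈ (T†).domain := e2 ▸ m2'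
    have v1 : T ⟨s, m1⟩ = T ⟨C y, c1⟩ := by
      rw [hcongr T _ _ m1 m1' e1, hsub T _ _ c1 (hTr _), hT2, sub_zero]
    have v2 : T† ⟨s, m2⟩ = T† ⟨B y, b1⟩ := by
      rw [hcongr (T†) _ _ m2 m2' e2, hsub (T†) _ _ b1 (hSr _), hS2, sub_zero]
    have m3 : T ⟨s, m1⟩ ∈ (T†).domain := v1 ▸ c2
    have m4 : T† ⟨s, m2⟩ ∈ T.domain := v2 ▸ b2
    refine ⟨(hPdom s).2 ⟨m1, m2, m3, m4⟩, ?_⟩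
    rw [hPval s _ m1 m2 m3 m4, hcongr (T†) _ _ m3 c2 v1, hcongr T _ _ m4 b2 v2,
      eq_sub_of_add_eq' hc, eq_sub_of_add_eq' hb, e0]
    abel
  have inj : ∀ x (hx : x ∈ P.domain), x + P ⟨x, hx⟩ = 0 → x = 0 := by
    intro x hx h
    obtain ⟨h1, h2, h3, h4⟩ := (hPdom x).1 hx
    rw [hPval x hx h1 h2 h3 h4] at h
    have q1 := hF ⟨T ⟨x, h1⟩, h3⟩ ⟨x, h1⟩
    have q2 := hF ⟨x, h2⟩ ⟨T† ⟨x, h2⟩, h4⟩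
    have q2' : inner ℂ (T ⟨T† ⟨x, h2⟩, h4⟩) x = inner ℂ (T† ⟨x, h2⟩) (T† ⟨x, h2⟩) := by
      have := congrArg (starRingEnd ℂ) q2
      rw [inner_conj_symm, inner_conj_symm] at this
      exact this.symm
    have h0 : inner ℂ (x + (T† ⟨T ⟨x, h1⟩, h3⟩ + T ⟨T† ⟨x, h2⟩, h4⟩)) x = 0 := by
      rw [h, inner_zero_left]
    rw [inner_add_left, inner_add_left, q2'] at h0
    have q1' : inner ℂ (T† ⟨T ⟨x, h1⟩, h3⟩) x = inner ℂ (T ⟨x, h1⟩) (T ⟨x, h1⟩) := q1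
    rw [q1', inner_self_eq_norm_sq_to_K, inner_self_eq_norm_sq_to_K,
      inner_self_eq_norm_sq_to_K] at h0
    have h0' : ‖x‖ ^ 2 + (‖T ⟨x, h1⟩‖ ^ 2 + ‖T† ⟨x, h2⟩‖ ^ 2) = 0 := by
      apply Complex.ofReal_injective
      push_cast
      exact h0
    have : ‖x‖ ^ 2 = 0 := by nlinarith [sq_nonneg ‖x‖, sq_nonneg ‖T ⟨x, h1⟩‖, sq_nonneg ‖T† ⟨x, h2⟩‖]
    simpa using this
  refine ⟨(hBsa.add hCsa).sub (IsSelfAdjoint.one _), key, fun y => ⟨(B + C - 1) y, key y, ?_⟩⟩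
  rintro x ⟨hx, hxy⟩
  obtain ⟨hs, hsy⟩ := key y
  apply sub_eq_zero.1
  apply inj _ (P.domain.sub_mem hx hs)
  rw [hsub P _ _ hx hs, sub_add_sub_comm, hxy, hsy, sub_self]
end

section
/- The three closed subspaces ker T ∩ ker T*, the closure of the range of T, and the closure of the range of T* are pairwise orthogonal and H decomposes orthogonally as H = (ker T ∩ ker T*) ⊕ cl(R(T)) ⊕ cl(R(T*)). Moreover ker P = ker T ∩ ker T* and cl(R(P)) = cl(R(T)) ⊕ cl(R(T*)), so that H = ker P ⊕ cl(R(P)). -/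
open scoped LinearPMap

/-- The kernel of a partially defined linear operator, as a submodule of the ambient space. -/
def LinearPMap.kerS {R E F : Type*} [Ring R] [AddCommGroup E] [Module R E] [AddCommGroup F]
    [Module R F] (T : E →ₗ.[R] F) : Submodule R E :=
  (LinearMap.ker T.toFun).map T.domain.subtype

/-- The range of a partially defined linear operator. -/
def LinearPMap.ranS {R E F : Type*} [Ring R] [AddCommGroup E] [Module R E] [AddCommGroup F]
    [Module R F] (T : E →ₗ.[R] F) : Submodule R F :=
  LinearMap.range T.toFun

open scoped InnerProductSpace

theorem kerS_mem {H : Type*} [NormedAddCommGroup H] [InnerProductSpace ℂ H]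
    (T : H →ₗ.[ℂ] H) (x : H) : x ∈ T.kerS ↔ ∃ h : x ∈ T.domain, T ⟨x, h⟩ = 0 := by
  constructor
  · rintro ⟨y, hy, rfl⟩
    exact ⟨y.2, hy⟩
  · rintro ⟨h, hx⟩
    exact ⟨⟨x, h⟩, hx, rfl⟩

theorem ranS_orth_mem {H : Type*} [NormedAddCommGroup H] [InnerProductSpace ℂ H]
    (T : H →ₗ.[ℂ] H) (x : H) : x ∈ T.ranSᗮ ↔ ∀ u : T.domain, ⟪T u, x⟫_ℂ = 0 := by
  rw [Submodule.mem_orthogonal]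
  constructor
  · intro h u
    exact h _ ⟨u, rfl⟩
  · rintro h _ ⟨u, rfl⟩
    exact h u

theorem kerS_adjoint {H : Type*} [NormedAddCommGroup H] [InnerProductSpace ℂ H] [CompleteSpace H]
    (T : H →ₗ.[ℂ] H) (hTd : Dense (T.domain : Set H)) : (T†).kerS = T.ranSᗮ := by
  ext x
  rw [kerS_mem, ranS_orth_mem]
  constructor
  · rintro ⟨h, hx⟩ u
    have := (LinearPMap.adjoint_isFormalAdjoint hTd).symm u ⟨x, h⟩
    rw [this, hx, inner_zero_right]
  · intro h
    have h' : ∀ u : T.domain, ⟪(0 : H), (u : H)⟫_ℂ = ⟪x, T u⟫_ℂ := by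
      intro u
      rw [inner_zero_left, inner_eq_zero_symm.1 (h u)]
    have hx : x ∈ (T†).domain := LinearPMap.mem_adjoint_domain_of_exists x ⟨0, h'⟩
    exact ⟨hx, LinearPMap.adjoint_apply_eq hTd ⟨x, hx⟩ h'⟩

theorem kerS_closed {H : Type*} [NormedAddCommGroup H] [InnerProductSpace ℂ H] [CompleteSpace H]
    (T : H →ₗ.[ℂ] H) (hTd : Dense (T.domain : Set H)) (hTc : T.IsClosed) :
    T.kerS = (T†).ranSᗮ := by
  ext x
  rw [kerS_mem, ranS_orth_mem]
  constructor
  · rintro ⟨h, hx⟩ u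
    have := (LinearPMap.adjoint_isFormalAdjoint hTd) u ⟨x, h⟩
    rw [this, hx, inner_zero_right]
  · intro h
    let G : Submodule ℂ (WithLp 2 (H × H)) :=
      T.graph.comap (WithLp.linearEquiv 2 ℂ (H × H)).toLinearMap
    have hGc : IsClosed (G : Set (WithLp 2 (H × H))) :=
      IsClosed.preimage (WithLp.prod_continuous_ofLp 2 H H) hTc
    have hmem : WithLp.toLp 2 (x, (0 : H)) ∈ Gᗮᗮ := by
      rw [Submodule.mem_orthogonal]
      intro w hw
      rw [Submodule.mem_orthogonal'] at hw
      have h1 : ∀ u : T.domain, ⟪-w.fst, (u : H)⟫_ℂ = ⟪w.snd, T u⟫_ℂ := by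
        intro u
        have := hw (WithLp.toLp 2 ((u : H), T u)) (T.mem_graph u)
        rw [WithLp.prod_inner_apply] at this
        rw [inner_neg_left]
        exact neg_eq_of_add_eq_zero_right this
      have hb : w.snd ∈ (T†).domain := LinearPMap.mem_adjoint_domain_of_exists _ ⟨_, h1⟩
      have h2 := LinearPMap.adjoint_apply_eq hTd ⟨w.snd, hb⟩ h1
      have h3 := h ⟨w.snd, hb⟩
      rw [h2, inner_neg_left, neg_eq_zero] at h3
      rw [WithLp.prod_inner_apply]
      simpa using h3
    rw [Submodule.orthogonal_orthogonal_eq_closure, hGc.submodule_topologicalClosure_eq] at hmem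
    have hm : (x, (0 : H)) ∈ T.graph := hmem
    rw [LinearPMap.mem_graph_iff] at hm
    obtain ⟨y, hy, hy0⟩ := hm
    simp only at hy hy0
    subst hy
    exact ⟨y.2, hy0⟩

/-- The orthogonal decomposition `H = (ker T ∩ ker T*) ⊕ cl(R(T)) ⊕ cl(R(T*))`, together with
`ker P = ker T ∩ ker T*` and `cl(R(P)) = cl(R(T)) ⊕ cl(R(T*))`, so `H = ker P ⊕ cl(R(P))`. -/
theorem stmt_3 {H : Type*} [NormedAddCommGroup H] [InnerProductSpace ℂ H] [CompleteSpace H]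
    (T : H →ₗ.[ℂ] H) (hTd : Dense (T.domain : Set H)) (hTc : T.IsClosed)
    (hTr : ∀ u : T.domain, T u ∈ T.domain)
    (hT2 : ∀ u : T.domain, T ⟨T u, hTr u⟩ = 0)
    (P : H →ₗ.[ℂ] H)
    (hPdom : ∀ x : H, x ∈ P.domain ↔
      ∃ (h1 : x ∈ T.domain) (h2 : x ∈ (T†).domain),
        T ⟨x, h1⟩ ∈ (T†).domain ∧ T† ⟨x, h2⟩ ∈ T.domain)
    (hPval : ∀ (x : H) (hx : x ∈ P.domain) (h1 : x ∈ T.domain) (h2 : x ∈ (T†).domain)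
      (h3 : T ⟨x, h1⟩ ∈ (T†).domain) (h4 : T† ⟨x, h2⟩ ∈ T.domain),
      P ⟨x, hx⟩ = T† ⟨T ⟨x, h1⟩, h3⟩ + T ⟨T† ⟨x, h2⟩, h4⟩)
    (hPsa : IsSelfAdjoint P) :
    IsClosed ((T.kerS ⊓ (T†).kerS : Submodule ℂ H) : Set H) ∧
    -- the three subspaces are pairwise orthogonal
    (T.kerS ⊓ (T†).kerS) ≤ (T.ranS.topologicalClosure)ᗮ ∧
    (T.kerS ⊓ (T†).kerS) ≤ ((T†).ranS.topologicalClosure)ᗮ ∧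
    T.ranS.topologicalClosure ≤ ((T†).ranS.topologicalClosure)ᗮ ∧
    -- together they span `H`
    (T.kerS ⊓ (T†).kerS) ⊔ T.ranS.topologicalClosure ⊔ (T†).ranS.topologicalClosure = ⊤ ∧
    -- kernel and closed range of `P`
    P.kerS = T.kerS ⊓ (T†).kerS ∧
    P.ranS.topologicalClosure = T.ranS.topologicalClosure ⊔ (T†).ranS.topologicalClosure ∧
    P.kerS ≤ (P.ranS.topologicalClosure)ᗮ ∧
    P.kerS ⊔ P.ranS.topologicalClosure = ⊤ := by
  have K1 := kerS_adjoint T hTd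
  have K2 := kerS_closed T hTd hTc
  have K3 : P.kerS = P.ranSᗮ := by
    have h := kerS_adjoint P hPsa.dense_domain
    rwa [LinearPMap.isSelfAdjoint_def.1 hPsa] at h
  have hN : T.kerS ⊓ (T†).kerS = (T.ranS.topologicalClosure)ᗮ ⊓ ((T†).ranS.topologicalClosure)ᗮ := by
    rw [K1, K2, Submodule.orthogonal_closure, Submodule.orthogonal_closure, inf_comm]
  have hNA : (T.kerS ⊓ (T†).kerS) ≤ (T.ranS.topologicalClosure)ᗮ := hN ▸ inf_le_left
  have hNB : (T.kerS ⊓ (T†).kerS) ≤ ((T†).ranS.topologicalClosure)ᗮ := hN ▸ inf_le_right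
  have hAB : T.ranS.topologicalClosure ≤ ((T†).ranS.topologicalClosure)ᗮ := by
    apply Submodule.topologicalClosure_minimal _ _ (Submodule.isClosed_orthogonal _)
    rw [Submodule.orthogonal_closure, ← K2]
    rintro _ ⟨u, rfl⟩
    exact (kerS_mem _ _).2 ⟨hTr u, hT2 u⟩
  have hNc : IsClosed ((T.kerS ⊓ (T†).kerS : Submodule ℂ H) : Set H) := by
    rw [hN, Submodule.inf_orthogonal]
    exact Submodule.isClosed_orthogonal _
  have hP : P.kerS = T.kerS ⊓ (T†).kerS := by
    ext x
    rw [Submodule.mem_inf, kerS_mem, kerS_mem, kerS_mem]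
    constructor
    · rintro ⟨hx, h0⟩
      obtain ⟨h1, h2, h3, h4⟩ := (hPdom x).1 hx
      rw [hPval x hx h1 h2 h3 h4] at h0
      have e1 := LinearPMap.adjoint_isFormalAdjoint hTd ⟨_, h3⟩ ⟨x, h1⟩
      have e2 := (LinearPMap.adjoint_isFormalAdjoint hTd).symm ⟨_, h4⟩ ⟨x, h2⟩
      have e3 := congrArg (fun z => ⟪z, x⟫_ℂ) h0
      simp only [inner_add_left, inner_zero_left] at e3
      simp only at e1 e2
      rw [e1, e2, inner_self_eq_norm_sq_to_K, inner_self_eq_norm_sq_to_K] at e3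
      have e4 : ‖T ⟨x, h1⟩‖ ^ 2 + ‖T† ⟨x, h2⟩‖ ^ 2 = 0 := by
        apply Complex.ofReal_injective
        push_cast
        exact e3
      refine ⟨⟨h1, ?_⟩, ⟨h2, ?_⟩⟩
      · rw [← norm_eq_zero, ← sq_eq_zero_iff]
        nlinarith [sq_nonneg ‖T ⟨x, h1⟩‖, sq_nonneg ‖T† ⟨x, h2⟩‖]
      · rw [← norm_eq_zero, ← sq_eq_zero_iff]
        nlinarith [sq_nonneg ‖T ⟨x, h1⟩‖, sq_nonneg ‖T† ⟨x, h2⟩‖]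
    · rintro ⟨⟨h1, e1⟩, ⟨h2, e2⟩⟩
      have h3 : T ⟨x, h1⟩ ∈ (T†).domain := by rw [e1]; exact zero_mem _
      have h4 : T† ⟨x, h2⟩ ∈ T.domain := by rw [e2]; exact zero_mem _
      have hx := (hPdom x).2 ⟨h1, h2, h3, h4⟩
      refine ⟨hx, ?_⟩
      rw [hPval x hx h1 h2 h3 h4]
      have z1 : (⟨T ⟨x, h1⟩, h3⟩ : (T†).domain) = 0 := Subtype.ext e1
      have z2 : (⟨T† ⟨x, h2⟩, h4⟩ : T.domain) = 0 := Subtype.ext e2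
      rw [z1, z2, LinearPMap.map_zero, LinearPMap.map_zero, add_zero]
  have hcA : CompleteSpace T.ranS.topologicalClosure :=
    (Submodule.isClosed_topologicalClosure _).completeSpace_coe
  have hcB : CompleteSpace (T†).ranS.topologicalClosure :=
    (Submodule.isClosed_topologicalClosure _).completeSpace_coe
  have hBA : (T†).ranS.topologicalClosure ≤ (T.ranS.topologicalClosure)ᗮ :=
    Submodule.IsOrtho.symm hAB
  have hS : (T.kerS ⊓ (T†).kerS) ⊔ T.ranS.topologicalClosure ⊔ (T†).ranS.topologicalClosure = ⊤ := by
    have a := Submodule.sup_orthogonal_inf_of_hasOrthogonalProjection hBA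
    have b := Submodule.sup_orthogonal_of_hasOrthogonalProjection (K := T.ranS.topologicalClosure)
    rw [← b, ← a, hN, inf_comm]
    ac_rfl
  have hPr : P.ranS.topologicalClosure = T.ranS.topologicalClosure ⊔ (T†).ranS.topologicalClosure := by
    rw [← Submodule.orthogonal_orthogonal_eq_closure, ← K3, hP]
    symm
    apply eq_of_le_of_inf_le_of_sup_le (z := T.kerS ⊓ (T†).kerS)
    · exact sup_le (Submodule.IsOrtho.symm hNA)
        (Submodule.IsOrtho.symm hNB)
    · rw [inf_comm, Submodule.inf_orthogonal_eq_bot]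
      exact bot_le
    · rw [sup_comm _ (T.kerS ⊓ (T†).kerS), sup_comm _ (T.kerS ⊓ (T†).kerS), ← sup_assoc, hS]
      exact le_top
  refine ⟨hNc, hNA, hNB, hAB, hS, hP, hPr, ?_, ?_⟩
  · rw [K3, Submodule.orthogonal_closure]
  · rw [hP, hPr, ← sup_assoc, hS]
end

section
/- The restricted operator Q = P|_{V₂}, with domain Dom P ∩ V₂, is a densely defined, closed, self-adjoint operator on the Hilbert space V₂, and Q has closed range. -/
open scoped LinearPMap

/-- `T'` is the restriction of the partially defined operator `T` to the subspaces `V` (source)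
and `W` (target): the domain of `T'` consists exactly of the elements of `V` lying in the domain
of `T`, and the values of `T'` agree with those of `T` (in particular `T` maps `Dom T ∩ V`
into `W`). -/
def IsRestrictionOf {R E : Type*} [Ring R] [AddCommGroup E] [Module R E]
    (T : E →ₗ.[R] E) (V W : Submodule R E) (T' : ↥V →ₗ.[R] ↥W) : Prop :=
  (∀ u : V, u ∈ T'.domain ↔ (u : E) ∈ T.domain) ∧
  ∀ (u : V) (hu : u ∈ T'.domain) (hu' : (u : E) ∈ T.domain),
    ((T' ⟨u, hu⟩ : W) : E) = T ⟨(u : E), hu'⟩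

open scoped InnerProductSpace in
theorem aux_selfadj {E : Type*} [NormedAddCommGroup E] [InnerProductSpace ℂ E] [CompleteSpace E]
    (Q : E →ₗ.[ℂ] E) (hs : ∀ x y : Q.domain, ⟪Q x, (y : E)⟫_ℂ = ⟪(x : E), Q y⟫_ℂ)
    (hdec : ∀ x : E, ∃ y k : Q.domain, Q k = 0 ∧ x = Q y + k) :
    Dense (Q.domain : Set E) ∧ Q.IsClosed ∧ IsSelfAdjoint Q ∧
    IsClosed ((LinearMap.range Q.toFun : Submodule ℂ E) : Set E) := by
  have hrk : ∀ y k : Q.domain, Q k = 0 → ⟪Q y, (k : E)⟫_ℂ = 0 := by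
    intro y k hk
    rw [hs, hk, inner_zero_right]
  -- orthogonal to the kernel implies in the range
  have hran : ∀ x : E, (∀ k : Q.domain, Q k = 0 → ⟪x, (k : E)⟫_ℂ = 0) →
      ∃ y : Q.domain, Q y = x := by
    intro x hx
    obtain ⟨y, k, hk, e⟩ := hdec x
    have h1 := hx k hk
    rw [e, inner_add_left, hrk y k hk, zero_add, inner_self_eq_zero] at h1
    exact ⟨y, by rw [e, h1, add_zero]⟩
  -- orthogonal to the range implies in the kernel
  have hker : ∀ x : E, (∀ z : Q.domain, ⟪x, Q z⟫_ℂ = 0) →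
      ∃ k : Q.domain, Q k = 0 ∧ (k : E) = x := by
    intro x hx
    obtain ⟨y, k, hk, e⟩ := hdec x
    have h1 := hx y
    have h2 : ⟪(k : E), Q y⟫_ℂ = 0 := by rw [← hs, hk, inner_zero_left]
    rw [e, inner_add_left, h2, add_zero, inner_self_eq_zero] at h1
    exact ⟨k, hk, by rw [e, h1, zero_add]⟩
  have hd : Dense (Q.domain : Set E) := by
    rw [Submodule.dense_iff_topologicalClosure_eq_top,
      Submodule.topologicalClosure_eq_top_iff, Submodule.eq_bot_iff]
    intro x hx
    have hx' : ∀ z : Q.domain, ⟪x, (z : E)⟫_ℂ = 0 := fun z =>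
      Submodule.inner_left_of_mem_orthogonal z.2 hx
    obtain ⟨y, hy⟩ := hran x (fun k _ => hx' k)
    obtain ⟨k, hk, e⟩ := hker y (fun z => by rw [← hs, hy]; exact hx' z)
    have : k = y := Subtype.ext e
    rw [← hy, ← this, hk]
  have hfa : Q.IsFormalAdjoint Q := fun x y => hs x y
  have hsa : IsSelfAdjoint Q := by
    rw [LinearPMap.isSelfAdjoint_def]
    refine le_antisymm ?_ (LinearPMap.IsFormalAdjoint.le_adjoint hd hfa)
    have key : ∀ y : Q.adjoint.domain, ∃ v : Q.domain, (v : E) = y ∧ Q v = Q.adjoint y := by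
      intro y
      have hy : ∀ z : Q.domain, ⟪Q.adjoint y, (z : E)⟫_ℂ = ⟪(y : E), Q z⟫_ℂ := fun z =>
        LinearPMap.adjoint_isFormalAdjoint hd y z
      obtain ⟨v, hv⟩ := hran (Q.adjoint y) (fun k hk => by rw [hy, hk, inner_zero_right])
      obtain ⟨k, hk, e⟩ := hker (v - y) (fun z => by
        rw [inner_sub_left, ← hs, hv, hy, sub_self])
      refine ⟨v - k, ?_, ?_⟩
      · push_cast
        rw [e]; abel
      · rw [LinearPMap.map_sub, hk, hv, sub_zero]
    constructor
    · intro y hy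
      obtain ⟨v, hv, _⟩ := key ⟨y, hy⟩
      have : (v : E) = y := hv
      rw [← this]; exact v.2
    · intro x y hxy
      obtain ⟨v, hv, e⟩ := key x
      rw [← e]
      congr 1
      exact Subtype.ext (hv.trans hxy)
  refine ⟨hd, hsa.isClosed, hsa, ?_⟩
  have : ((LinearMap.range Q.toFun : Submodule ℂ E) : Set E) =
      ⋂ k : {k : Q.domain // Q k = 0}, {x : E | ⟪x, (k.1 : E)⟫_ℂ = 0} := by
    ext x
    simp only [Set.mem_iInter, Set.mem_ofPred_eq, SetLike.mem_coe, LinearMap.mem_range]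
    constructor
    · rintro ⟨y, rfl⟩ k
      exact hrk y k.1 k.2
    · intro h
      exact hran x (fun k hk => h ⟨k, hk⟩)
  rw [this]
  exact isClosed_iInter fun k => isClosed_eq (by fun_prop) continuous_const

open scoped InnerProductSpace in
theorem aux_range {E F : Type*} [NormedAddCommGroup E] [InnerProductSpace ℂ E] [CompleteSpace E]
    [NormedAddCommGroup F] [InnerProductSpace ℂ F] [CompleteSpace F]
    (B : E →ₗ.[ℂ] F) (hc : B.IsClosed)
    (hR : IsClosed ((LinearMap.range B.toFun : Submodule ℂ F) : Set F))
    (c : E) (h : ∀ k : B.domain, B k = 0 → ⟪c, (k : E)⟫_ℂ = 0) :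
    ∃ d : B.domain, ∀ x : B.domain, ⟪c, (x : E)⟫_ℂ = ⟪B d, B x⟫_ℂ := by
  have : CompleteSpace B.graph := IsClosed.completeSpace_coe (hs := hc)
  have : CompleteSpace (LinearMap.range B.toFun) := IsClosed.completeSpace_coe (hs := hR)
  have hm : ∀ p : B.graph, (p : E × F).2 ∈ LinearMap.range B.toFun := by
    rintro ⟨p, hp⟩
    obtain ⟨y, h1, h2⟩ := (LinearPMap.mem_graph_iff B).1 hp
    exact ⟨y, h2⟩
  let g : B.graph →L[ℂ] LinearMap.range B.toFun :=
    ((ContinuousLinearMap.snd ℂ E F).comp B.graph.subtypeL).codRestrict _ hm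
  have hg : Function.Surjective g := by
    rintro ⟨_, ⟨x, rfl⟩⟩
    exact ⟨⟨((x : E), B x), B.mem_graph x⟩, rfl⟩
  let f : B.graph →L[ℂ] ℂ :=
    (innerSL ℂ c).comp ((ContinuousLinearMap.fst ℂ E F).comp B.graph.subtypeL)
  have hfg0 : ∀ p, g p = 0 → f p = 0 := by
    rintro ⟨p, hp⟩ hgp
    obtain ⟨y, h1, h2⟩ := (LinearPMap.mem_graph_iff B).1 hp
    have h3 : p.2 = 0 := congrArg Subtype.val hgp
    have h4 := h y (h2.trans h3)
    rw [h1] at h4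
    exact h4
  have hfg : ∀ p q, g p = g q → f p = f q := by
    intro p q hpq
    have := hfg0 (p - q) (by rw [map_sub, hpq, sub_self])
    rwa [map_sub, sub_eq_zero] at this
  obtain ⟨C, hC0, hC⟩ := ContinuousLinearMap.exists_preimage_norm_le g hg
  choose s hs1 hs2 using hC
  let φ : (LinearMap.range B.toFun) →ₗ[ℂ] ℂ :=
    { toFun := fun r => f (s r)
      map_add' := fun a b => by
        rw [← map_add]; apply hfg; rw [map_add, hs1, hs1, hs1]
      map_smul' := fun a b => by
        rw [← map_smul]; apply hfg; rw [map_smul, hs1, hs1]; rfl }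
  let ψ := φ.mkContinuous (‖f‖ * C) (fun r => by
    calc ‖f (s r)‖ ≤ ‖f‖ * ‖s r‖ := f.le_opNorm _
      _ ≤ ‖f‖ * (C * ‖r‖) := by gcongr; exact hs2 r
      _ = _ := by ring)
  obtain ⟨⟨_, ⟨d, rfl⟩⟩, hb⟩ := (InnerProductSpace.toDual ℂ (LinearMap.range B.toFun)).surjective ψ
  refine ⟨d, fun x => ?_⟩
  have h1 := congrArg (fun l => l ⟨B x, ⟨x, rfl⟩⟩) hb
  have h2 : ψ ⟨B x, ⟨x, rfl⟩⟩ = ⟪c, (x : E)⟫_ℂ := by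
    change f (s _) = f ⟨((x : E), B x), B.mem_graph x⟩
    apply hfg
    rw [hs1]; rfl
  rw [← h2]
  exact h1.symm

/-- Orthogonal splitting along the kernel of a closed operator. -/
theorem aux_kerdec {E F : Type*} [NormedAddCommGroup E] [InnerProductSpace ℂ E] [CompleteSpace E]
    [NormedAddCommGroup F] [InnerProductSpace ℂ F]
    (B : E →ₗ.[ℂ] F) (hc : B.IsClosed) (x : E) :
    ∃ (n : B.domain) (c : E), B n = 0 ∧ x = n + c ∧
      ∀ k : B.domain, B k = 0 → inner ℂ c (k : E) = 0 := by
  let K : Submodule ℂ E := (LinearMap.ker B.toFun).map B.domain.subtype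
  have hK : ∀ y, y ∈ K ↔ (y, (0 : F)) ∈ B.graph := by
    intro y
    rw [LinearPMap.mem_graph_iff]
    simp only [K, Submodule.mem_map, LinearMap.mem_ker]
    constructor
    · rintro ⟨z, h1, h2⟩; exact ⟨z, h2, h1⟩
    · rintro ⟨z, h1, h2⟩; exact ⟨z, h2, h1⟩
  have hcl : IsClosed (K : Set E) := by
    have : (K : Set E) = (fun y : E => (y, (0 : F))) ⁻¹' (B.graph : Set (E × F)) := by
      ext y; exact hK y
    rw [this]
    exact IsClosed.preimage (by fun_prop) hc
  have : CompleteSpace K := IsClosed.completeSpace_coe (hs := hcl)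
  obtain ⟨n, hn, c, hc', e⟩ := K.exists_add_mem_mem_orthogonal x
  obtain ⟨z, hz, rfl⟩ := hn
  refine ⟨z, c, hz, e, fun k hk => ?_⟩
  exact Submodule.inner_left_of_mem_orthogonal (K := K) ⟨k, hk, rfl⟩ hc'

theorem aux_closed {H : Type*} [NormedAddCommGroup H] [InnerProductSpace ℂ H]
    (T : H →ₗ.[ℂ] H) (hTc : T.IsClosed) (V W : Submodule ℂ H) (T' : ↥V →ₗ.[ℂ] ↥W)
    (h : IsRestrictionOf T V W T') : T'.IsClosed := by
  have : (T'.graph : Set (V × W)) =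
      (fun p : V × W => ((p.1 : H), (p.2 : H))) ⁻¹' (T.graph : Set (H × H)) := by
    ext ⟨a, b⟩
    simp only [SetLike.mem_coe, Set.mem_preimage, LinearPMap.mem_graph_iff]
    constructor
    · rintro ⟨y, rfl, rfl⟩
      exact ⟨⟨_, (h.1 _).1 y.2⟩, rfl, (h.2 _ y.2 _).symm⟩
    · rintro ⟨⟨y, hy⟩, h1, h2⟩
      obtain rfl : y = a := h1
      exact ⟨⟨a, (h.1 _).2 hy⟩, rfl, Subtype.ext ((h.2 _ _ hy).trans h2)⟩
  unfold LinearPMap.IsClosed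
  rw [this]
  exact IsClosed.preimage (by fun_prop) hTc

theorem stmt_5 {H : Type*} [NormedAddCommGroup H] [InnerProductSpace ℂ H] [CompleteSpace H]
    -- `T` is closed and densely defined, with range contained in `Dom T` and `T² = 0`
    (T : H →ₗ.[ℂ] H) (hTd : Dense (T.domain : Set H)) (hTc : T.IsClosed)
    (hTr : ∀ u : T.domain, T u ∈ T.domain)
    (hT2 : ∀ u : T.domain, T ⟨T u, hTr u⟩ = 0)
    -- `P = T*T + TT*` with its natural domain; `P` is self-adjoint
    (P : H →ₗ.[ℂ] H)
    (hPdom : ∀ x : H, x ∈ P.domain ↔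
      ∃ (h1 : x ∈ T.domain) (h2 : x ∈ (T†).domain),
        T ⟨x, h1⟩ ∈ (T†).domain ∧ T† ⟨x, h2⟩ ∈ T.domain)
    (hPval : ∀ (x : H) (hx : x ∈ P.domain) (h1 : x ∈ T.domain) (h2 : x ∈ (T†).domain)
      (h3 : T ⟨x, h1⟩ ∈ (T†).domain) (h4 : T† ⟨x, h2⟩ ∈ T.domain),
      P ⟨x, hx⟩ = T† ⟨T ⟨x, h1⟩, h3⟩ + T ⟨T† ⟨x, h2⟩, h4⟩)
    (hPsa : IsSelfAdjoint P)
    -- the closed subspaces `V₁, V₂, V₃`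
    (V₁ V₂ V₃ : Submodule ℂ H)
    (hV₁ : IsClosed (V₁ : Set H)) (hV₂ : IsClosed (V₂ : Set H)) (hV₃ : IsClosed (V₃ : Set H))
    [CompleteSpace V₁] [CompleteSpace V₂] [CompleteSpace V₃]
    -- `T₁ = T|_{V₁} : V₁ ⇀ V₂` and `T₂ = T|_{V₂} : V₂ ⇀ V₃`, densely defined with closed range
    (T₁ : ↥V₁ →ₗ.[ℂ] ↥V₂) (hT₁ : IsRestrictionOf T V₁ V₂ T₁)
    (hT₁d : Dense (T₁.domain : Set V₁))
    (T₂ : ↥V₂ →ₗ.[ℂ] ↥V₃) (hT₂ : IsRestrictionOf T V₂ V₃ T₂)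
    (hT₂d : Dense (T₂.domain : Set V₂))
    (hR₁ : IsClosed ((LinearMap.range T₁.toFun : Submodule ℂ V₂) : Set V₂))
    (hR₂ : IsClosed ((LinearMap.range T₂.toFun : Submodule ℂ V₃) : Set V₃))
    -- `S₂ = T*|_{V₂} : V₂ ⇀ V₁` and `S₃ = T*|_{V₃} : V₃ ⇀ V₂`; the adjoint of `T|_{V₁}` is
    -- `T*|_{V₂}` and the adjoint of `T|_{V₂}` is `T*|_{V₃}`
    (S₂ : ↥V₂ →ₗ.[ℂ] ↥V₁) (hS₂ : IsRestrictionOf (T†) V₂ V₁ S₂)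
    (S₃ : ↥V₃ →ₗ.[ℂ] ↥V₂) (hS₃ : IsRestrictionOf (T†) V₃ V₂ S₃)
    (hadj₁ : T₁† = S₂) (hadj₂ : T₂† = S₃)
    -- `Q = P|_{V₂}`
    (Q : ↥V₂ →ₗ.[ℂ] ↥V₂) (hQ : IsRestrictionOf P V₂ V₂ Q)
    :
    -- `Q` is densely defined, closed, self-adjoint, and has closed range
    Dense (Q.domain : Set V₂) ∧ Q.IsClosed ∧ IsSelfAdjoint Q ∧
    IsClosed ((LinearMap.range Q.toFun : Submodule ℂ V₂) : Set V₂) := by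
  subst hadj₁ hadj₂
  have hc₁ := aux_closed T hTc V₁ V₂ T₁ hT₁
  have hc₂ := aux_closed T hTc V₂ V₃ T₂ hT₂
  -- `T₂ T₁ = 0`
  have h21 : ∀ a : T₁.domain, ∃ h : T₁ a ∈ T₂.domain, T₂ ⟨T₁ a, h⟩ = 0 := by
    intro a
    have ha := (hT₁.1 _).1 a.2
    have e : ((T₁ a : V₂) : H) = T ⟨a, ha⟩ := hT₁.2 _ a.2 ha
    have hm : ((T₁ a : V₂) : H) ∈ T.domain := by rw [e]; exact hTr _
    refine ⟨(hT₂.1 _).2 hm, Subtype.ext ?_⟩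
    rw [hT₂.2 _ _ hm]
    have := hT2 ⟨a, ha⟩
    simp only [e]
    exact this
  -- description of `Q`
  have hQ' : ∀ (u : V₂) (h1 : u ∈ T₂.domain) (h2 : u ∈ (T₁†).domain)
      (h3 : T₂ ⟨u, h1⟩ ∈ (T₂†).domain) (h4 : T₁† ⟨u, h2⟩ ∈ T₁.domain),
      ∃ hu : u ∈ Q.domain, Q ⟨u, hu⟩ = T₂† ⟨T₂ ⟨u, h1⟩, h3⟩ + T₁ ⟨T₁† ⟨u, h2⟩, h4⟩ := by
    intro u h1 h2 h3 h4
    have g1 := (hT₂.1 _).1 h1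
    have g2 := (hS₂.1 _).1 h2
    have g3 := (hS₃.1 _).1 h3
    have g4 := (hT₁.1 _).1 h4
    have e1 := hT₂.2 _ h1 g1
    have e2 := hS₂.2 _ h2 g2
    have e3 := hS₃.2 _ h3 g3
    have e4 := hT₁.2 _ h4 g4
    simp only [e1] at g3 e3
    simp only [e2] at g4 e4
    have hu : (u : H) ∈ P.domain := (hPdom _).2 ⟨g1, g2, g3, g4⟩
    refine ⟨(hQ.1 _).2 hu, Subtype.ext ?_⟩
    rw [hQ.2 _ _ hu, hPval _ hu g1 g2 g3 g4, Submodule.coe_add, e3, e4]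
  -- orthogonal to `ran T₁` implies in `ker T₁†`
  have hk₁ : ∀ u : V₂, (∀ a : T₁.domain, inner ℂ u (T₁ a) = 0) →
      ∃ h : u ∈ (T₁†).domain, T₁† ⟨u, h⟩ = 0 := by
    intro u hu
    have h : u ∈ (T₁†).domain := LinearPMap.mem_adjoint_domain_of_exists u
      ⟨0, fun x => by rw [inner_zero_left, hu]⟩
    exact ⟨h, LinearPMap.adjoint_apply_eq hT₁d _ fun x => by rw [inner_zero_left, hu]⟩
  have hT₂0 : ∀ h : (0 : V₃) ∈ (T₂†).domain, T₂† ⟨0, h⟩ = 0 := fun h => LinearPMap.map_zero _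
  have hT₁0 : ∀ h : (0 : V₁) ∈ T₁.domain, T₁ ⟨0, h⟩ = 0 := fun h => LinearPMap.map_zero _
  -- elements of `ran T₁`
  have hA : ∀ a : T₁.domain, ∃ y : Q.domain, Q y = T₁ a := by
    intro a
    obtain ⟨n, c, hn, e, hc⟩ := aux_kerdec T₁ hc₁ (a : V₁)
    obtain ⟨d, hd⟩ := aux_range T₁ hc₁ hR₁ c hc
    obtain ⟨m1, z1⟩ := h21 d
    have m2 : T₁ d ∈ (T₁†).domain := LinearPMap.mem_adjoint_domain_of_exists _ ⟨c, hd⟩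
    have z2 : T₁† ⟨T₁ d, m2⟩ = c := LinearPMap.adjoint_apply_eq hT₁d _ hd
    have ec : c = ((a - n : T₁.domain) : V₁) := by push_cast; rw [e]; abel
    have m4 : T₁† ⟨T₁ d, m2⟩ ∈ T₁.domain := by rw [z2, ec]; exact (a - n).2
    have m3 : T₂ ⟨T₁ d, m1⟩ ∈ (T₂†).domain := by rw [z1]; exact zero_mem _
    obtain ⟨hu, hq⟩ := hQ' _ m1 m2 m3 m4
    refine ⟨⟨_, hu⟩, ?_⟩
    rw [hq]
    simp only [z1, z2, ec, hT₂0, zero_add]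
    change T₁ (a - n) = _
    rw [LinearPMap.map_sub, hn, sub_zero]
  -- elements orthogonal to `ker T₂`
  have hB : ∀ c : V₂, (∀ k : T₂.domain, T₂ k = 0 → inner ℂ c (k : V₂) = 0) →
      ∃ y : Q.domain, Q y = c := by
    intro c hc
    obtain ⟨d', hd'⟩ := aux_range T₂ hc₂ hR₂ c hc
    obtain ⟨n, d, hn, e, hdk⟩ := aux_kerdec T₂ hc₂ (d' : V₂)
    have ed : d = ((d' - n : T₂.domain) : V₂) := by push_cast; rw [e]; abel
    have m1 : d ∈ T₂.domain := by rw [ed]; exact (d' - n).2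
    have z1 : T₂ ⟨d, m1⟩ = T₂ d' := by
      have : (⟨d, m1⟩ : T₂.domain) = d' - n := Subtype.ext ed
      rw [this, LinearPMap.map_sub, hn, sub_zero]
    obtain ⟨m2, z2⟩ := hk₁ d (fun a => by
      obtain ⟨h, h'⟩ := h21 a
      exact hdk ⟨_, h⟩ h')
    have m3 : T₂ ⟨d, m1⟩ ∈ (T₂†).domain := by
      rw [z1]; exact LinearPMap.mem_adjoint_domain_of_exists _ ⟨c, hd'⟩
    have z3 : T₂† ⟨T₂ ⟨d, m1⟩, m3⟩ = c := LinearPMap.adjoint_apply_eq hT₂d _ (fun x => by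
      rw [hd', ← z1])
    have m4 : T₁† ⟨d, m2⟩ ∈ T₁.domain := by rw [z2]; exact zero_mem _
    obtain ⟨hu, hq⟩ := hQ' _ m1 m2 m3 m4
    refine ⟨⟨_, hu⟩, ?_⟩
    rw [hq, z3]
    simp only [z2, hT₁0, add_zero]
  apply aux_selfadj
  · intro x y
    have hx := (hQ.1 _).1 x.2
    have hy := (hQ.1 _).1 y.2
    have ex : ((Q x : V₂) : H) = P ⟨_, hx⟩ := hQ.2 _ x.2 hx
    have ey : ((Q y : V₂) : H) = P ⟨_, hy⟩ := hQ.2 _ y.2 hy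
    have hP : P.IsFormalAdjoint P := by
      have := LinearPMap.adjoint_isFormalAdjoint hPsa.dense_domain
      rwa [LinearPMap.isSelfAdjoint_def.1 hPsa] at this
    rw [Submodule.coe_inner, Submodule.coe_inner, ex, ey]
    exact hP ⟨_, hx⟩ ⟨_, hy⟩
  · intro x
    have : CompleteSpace (LinearMap.range T₁.toFun) := IsClosed.completeSpace_coe (hs := hR₁)
    obtain ⟨_, ⟨a, rfl⟩, x', hx', e⟩ :=
      (LinearMap.range T₁.toFun).exists_add_mem_mem_orthogonal x
    obtain ⟨n, c, hn, e', hc⟩ := aux_kerdec T₂ hc₂ x'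
    obtain ⟨y₁, hy₁⟩ := hA a
    obtain ⟨y₂, hy₂⟩ := hB c hc
    obtain ⟨m2, z2⟩ := hk₁ n (fun b => by
      obtain ⟨h, h'⟩ := h21 b
      have h1 : inner ℂ c (T₁ b) = 0 := hc ⟨_, h⟩ h'
      have h2 : inner ℂ x' (T₁ b) = 0 :=
        Submodule.inner_left_of_mem_orthogonal (K := LinearMap.range T₁.toFun) ⟨b, rfl⟩ hx'
      rw [e', inner_add_left, h1, add_zero] at h2
      exact h2)
    have m3 : T₂ ⟨n, n.2⟩ ∈ (T₂†).domain := by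
      change T₂ n ∈ _
      rw [hn]; exact zero_mem _
    have m4 : T₁† ⟨n, m2⟩ ∈ T₁.domain := by rw [z2]; exact zero_mem _
    obtain ⟨hu, hq⟩ := hQ' _ n.2 m2 m3 m4
    refine ⟨y₁ + y₂, ⟨_, hu⟩, ?_, ?_⟩
    · rw [hq]
      simp only [z2, hn, hT₁0, hT₂0, add_zero]
    · rw [LinearPMap.map_add, hy₁, hy₂, e, e']
      change T₁ a + _ = T₁ a + c + n
      abel
end

section
/- There exists a constant c > 0 such that: (a) c‖u‖² ≤ ‖Tu‖² + ‖T*u‖² for all u ∈ Dom T ∩ Dom T* ∩ R(Q), and (b) c‖u‖ ≤ ‖Qu‖ for all u ∈ Dom Q ∩ R(Q). -/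
open scoped LinearPMap

theorem aux_bound {H : Type*} [NormedAddCommGroup H] [InnerProductSpace ℂ H]
    (T : H →ₗ.[ℂ] H) (hTc : T.IsClosed) (V W : Submodule ℂ H)
    [CompleteSpace V] [CompleteSpace W]
    (T' : ↥V →ₗ.[ℂ] ↥W) (hT : IsRestrictionOf T V W T')
    (hR : IsClosed ((LinearMap.range T'.toFun : Submodule ℂ W) : Set W)) :
    ∃ C : ℝ, 0 < C ∧ ∀ (x : V) (hx : (x : H) ∈ T.domain),
      ∃ (w : H) (hw : w ∈ T.domain), T ⟨w, hw⟩ = T ⟨x, hx⟩ ∧ ‖w‖ ≤ C * ‖T ⟨x, hx⟩‖ := by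
  have hgr : IsClosed (T'.graph : Set (V × W)) := by
    have : (T'.graph : Set (V × W)) =
        (fun p : V × W => ((p.1 : H), (p.2 : H))) ⁻¹' (T.graph : Set (H × H)) := by
      ext ⟨a, b⟩
      simp only [SetLike.mem_coe, Set.mem_preimage, LinearPMap.mem_graph_iff]
      constructor
      · rintro ⟨y, rfl, rfl⟩
        have h := (hT.1 _).1 y.2
        exact ⟨⟨_, h⟩, rfl, (hT.2 _ y.2 h).symm⟩
      · rintro ⟨⟨y, hy⟩, rfl, h⟩
        have h' := (hT.1 a).2 hy
        refine ⟨⟨a, h'⟩, rfl, Subtype.ext ?_⟩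
        rw [hT.2 _ h' hy]; exact h
    rw [this]
    exact IsClosed.preimage (by fun_prop) hTc
  have : CompleteSpace T'.graph := hgr.completeSpace_coe
  have : CompleteSpace (LinearMap.range T'.toFun) := hR.completeSpace_coe
  let f : T'.graph →L[ℂ] LinearMap.range T'.toFun :=
    ((ContinuousLinearMap.snd ℂ V W).comp T'.graph.subtypeL).codRestrict _ (by
      rintro ⟨p, hp⟩
      obtain ⟨y, _, h2⟩ := (LinearPMap.mem_graph_iff _).1 hp
      exact ⟨y, h2⟩)
  have hf : Function.Surjective f := by
    rintro ⟨_, y, rfl⟩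
    exact ⟨⟨(y, T' y), T'.mem_graph y⟩, rfl⟩
  obtain ⟨C, hC, h⟩ := f.exists_preimage_norm_le hf
  refine ⟨C, hC, fun x hx => ?_⟩
  have hx' := (hT.1 x).2 hx
  obtain ⟨⟨⟨a, b⟩, hp⟩, h1, h2⟩ := h ⟨T' ⟨x, hx'⟩, ⟨_, rfl⟩⟩
  obtain ⟨y, hy1, hy2⟩ := (LinearPMap.mem_graph_iff _).1 hp
  have hb : b = T' ⟨x, hx'⟩ := congrArg Subtype.val h1
  have hyT := (hT.1 _).1 y.2
  have e1 := hT.2 _ y.2 hyT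
  have e2 := hT.2 _ hx' hx
  refine ⟨((y : V) : H), hyT, ?_, ?_⟩
  · rw [← e1, ← e2, ← hb]
    exact congrArg Subtype.val hy2
  · rw [← e2]
    simp only at hy1
    rw [hy1]
    exact le_trans (norm_fst_le (a, b)) h2

theorem stmt_7 {H : Type*} [NormedAddCommGroup H] [InnerProductSpace ℂ H] [CompleteSpace H]
    -- `T` is closed and densely defined, with range contained in `Dom T` and `T² = 0`
    (T : H →ₗ.[ℂ] H) (hTd : Dense (T.domain : Set H)) (hTc : T.IsClosed)
    (hTr : ∀ u : T.domain, T u ∈ T.domain)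
    (hT2 : ∀ u : T.domain, T ⟨T u, hTr u⟩ = 0)
    -- `P = T*T + TT*` with its natural domain; `P` is self-adjoint
    (P : H →ₗ.[ℂ] H)
    (hPdom : ∀ x : H, x ∈ P.domain ↔
      ∃ (h1 : x ∈ T.domain) (h2 : x ∈ (T†).domain),
        T ⟨x, h1⟩ ∈ (T†).domain ∧ T† ⟨x, h2⟩ ∈ T.domain)
    (hPval : ∀ (x : H) (hx : x ∈ P.domain) (h1 : x ∈ T.domain) (h2 : x ∈ (T†).domain)
      (h3 : T ⟨x, h1⟩ ∈ (T†).domain) (h4 : T† ⟨x, h2⟩ ∈ T.domain),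
      P ⟨x, hx⟩ = T† ⟨T ⟨x, h1⟩, h3⟩ + T ⟨T† ⟨x, h2⟩, h4⟩)
    (hPsa : IsSelfAdjoint P)
    -- the closed subspaces `V₁, V₂, V₃`
    (V₁ V₂ V₃ : Submodule ℂ H)
    (hV₁ : IsClosed (V₁ : Set H)) (hV₂ : IsClosed (V₂ : Set H)) (hV₃ : IsClosed (V₃ : Set H))
    [CompleteSpace V₁] [CompleteSpace V₂] [CompleteSpace V₃]
    -- `T₁ = T|_{V₁} : V₁ ⇀ V₂` and `T₂ = T|_{V₂} : V₂ ⇀ V₃`, densely defined with closed range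
    (T₁ : ↥V₁ →ₗ.[ℂ] ↥V₂) (hT₁ : IsRestrictionOf T V₁ V₂ T₁)
    (hT₁d : Dense (T₁.domain : Set V₁))
    (T₂ : ↥V₂ →ₗ.[ℂ] ↥V₃) (hT₂ : IsRestrictionOf T V₂ V₃ T₂)
    (hT₂d : Dense (T₂.domain : Set V₂))
    (hR₁ : IsClosed ((LinearMap.range T₁.toFun : Submodule ℂ V₂) : Set V₂))
    (hR₂ : IsClosed ((LinearMap.range T₂.toFun : Submodule ℂ V₃) : Set V₃))
    -- `S₂ = T*|_{V₂} : V₂ ⇀ V₁` and `S₃ = T*|_{V₃} : V₃ ⇀ V₂`; the adjoint of `T|_{V₁}` is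
    -- `T*|_{V₂}` and the adjoint of `T|_{V₂}` is `T*|_{V₃}`
    (S₂ : ↥V₂ →ₗ.[ℂ] ↥V₁) (hS₂ : IsRestrictionOf (T†) V₂ V₁ S₂)
    (S₃ : ↥V₃ →ₗ.[ℂ] ↥V₂) (hS₃ : IsRestrictionOf (T†) V₃ V₂ S₃)
    (hadj₁ : T₁† = S₂) (hadj₂ : T₂† = S₃)
    -- `Q = P|_{V₂}`
    (Q : ↥V₂ →ₗ.[ℂ] ↥V₂) (hQ : IsRestrictionOf P V₂ V₂ Q)
    :
    ∃ c : ℝ, 0 < c ∧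
      -- (a) `c‖u‖² ≤ ‖Tu‖² + ‖T*u‖²` for `u ∈ Dom T ∩ Dom T* ∩ R(Q)`
      (∀ (u : V₂) (h1 : (u : H) ∈ T.domain) (h2 : (u : H) ∈ (T†).domain),
        u ∈ LinearMap.range Q.toFun →
          c * ‖(u : H)‖ ^ 2 ≤ ‖T ⟨(u : H), h1⟩‖ ^ 2 + ‖T† ⟨(u : H), h2⟩‖ ^ 2) ∧
      -- (b) `c‖u‖ ≤ ‖Qu‖` for `u ∈ Dom Q ∩ R(Q)`
      (∀ (u : V₂) (hu : u ∈ Q.domain), u ∈ LinearMap.range Q.toFun →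
        c * ‖u‖ ≤ ‖Q ⟨u, hu⟩‖) := by
  obtain ⟨C₁, hC₁, hb₁⟩ := aux_bound T hTc V₁ V₂ T₁ hT₁ hR₁
  obtain ⟨C₂, hC₂, hb₂⟩ := aux_bound T hTc V₂ V₃ T₂ hT₂ hR₂
  have hfa : ∀ (x : H) (hx : x ∈ (T†).domain) (y : H) (hy : y ∈ T.domain),
      inner ℂ (T† ⟨x, hx⟩) y = inner ℂ x (T ⟨y, hy⟩) := fun x hx y hy =>
    LinearPMap.adjoint_isFormalAdjoint hTd ⟨x, hx⟩ ⟨y, hy⟩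
  -- main estimate
  have hA : ∀ (u : V₂) (h1 : (u : H) ∈ T.domain) (h2 : (u : H) ∈ (T†).domain),
      u ∈ LinearMap.range Q.toFun →
      ‖(u : H)‖ ≤ C₂ * ‖T ⟨(u : H), h1⟩‖ + C₁ * ‖T† ⟨(u : H), h2⟩‖ := by
    rintro u h1 h2 ⟨⟨v, hvQ⟩, hv⟩
    have hvP := (hQ.1 v).1 hvQ
    obtain ⟨g1, g2, g3, g4⟩ := (hPdom _).1 hvP
    have hu : (u : H) = T† ⟨T ⟨v, g1⟩, g3⟩ + T ⟨T† ⟨v, g2⟩, g4⟩ := by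
      rw [← hPval v hvP g1 g2 g3 g4, ← hQ.2 v hvQ hvP, ← hv]; rfl
    have hbT : T ⟨T† ⟨v, g2⟩, g4⟩ ∈ T.domain := hTr _
    have hb0 : T ⟨T ⟨T† ⟨v, g2⟩, g4⟩, hbT⟩ = 0 := hT2 _
    have hTv : (T ⟨v, g1⟩) ∈ T.domain := hTr _
    have haS : ∀ x : T.domain, inner ℂ (0 : H) (x : H) =
        inner ℂ (T† ⟨T ⟨v, g1⟩, g3⟩) (T x) := by
      intro x
      rw [hfa _ g3 _ (hTr x), hT2 x]; simp
    have haA : T† ⟨T ⟨v, g1⟩, g3⟩ ∈ (T†).domain :=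
      LinearPMap.mem_adjoint_domain_of_exists _ ⟨0, haS⟩
    have hS2mem : T† ⟨v, g2⟩ ∈ V₁ := by
      rw [← hS₂.2 v ((hS₂.1 v).2 g2) g2]; exact Subtype.property _
    have hS3mem : T† ⟨T ⟨v, g1⟩, g3⟩ ∈ V₂ := by
      have hm : T ⟨v, g1⟩ ∈ V₃ := by
        rw [← hT₂.2 v ((hT₂.1 v).2 g1) g1]; exact Subtype.property _
      rw [← hS₃.2 ⟨_, hm⟩ ((hS₃.1 ⟨_, hm⟩).2 g3) g3]; exact Subtype.property _
    have haA0 : T† ⟨_, haA⟩ = 0 := LinearPMap.adjoint_apply_eq hTd ⟨_, haA⟩ haS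
    have hker : ∀ (z : H) (hz : z ∈ T.domain), 
        inner ℂ (T† ⟨T ⟨v, g1⟩, g3⟩) z = inner ℂ (T ⟨v, g1⟩) (T ⟨z, hz⟩) := hfa _ g3
    obtain ⟨w₁, hw₁, hw₁e, hw₁n⟩ := hb₁ ⟨_, hS2mem⟩ g4
    generalize T† ⟨T ⟨v, g1⟩, g3⟩ = a at *
    simp only at hw₁e hw₁n
    generalize T ⟨T† ⟨v, g2⟩, g4⟩ = b at *
    have haT : a ∈ T.domain := by
      rw [show a = u - b by rw [hu]; abel]; exact T.domain.sub_mem h1 hbT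
    have hbA : b ∈ (T†).domain := by
      rw [show b = u - a by rw [hu]; abel]; exact (T†).domain.sub_mem h2 haA
    have hTu : T ⟨u, h1⟩ = T ⟨a, haT⟩ := by
      have : (⟨u, h1⟩ : T.domain) = ⟨a, haT⟩ + ⟨b, hbT⟩ := Subtype.ext hu
      rw [this, LinearPMap.map_add, hb0, add_zero]
    have hSu : T† ⟨u, h2⟩ = T† ⟨b, hbA⟩ := by
      have : (⟨u, h2⟩ : (T†).domain) = ⟨a, haA⟩ + ⟨b, hbA⟩ := Subtype.ext hu
      rw [this, LinearPMap.map_add, haA0, zero_add]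
    have canc : ∀ (x y : H) (M : ℝ), inner ℂ x x = inner ℂ y x ∨ inner ℂ x x = inner ℂ x y →
        ‖y‖ ≤ M → ‖x‖ ≤ M := by
      intro x y M h hM
      have h' : ‖x‖ * ‖x‖ ≤ ‖x‖ * ‖y‖ := by
        have e : ‖x‖ * ‖x‖ = ‖inner ℂ x x‖ := by
          rw [inner_self_eq_norm_sq_to_K]; simp [sq]
        rw [e]
        rcases h with h | h <;> rw [h]
        · rw [mul_comm]; exact norm_inner_le_norm _ _
        · exact norm_inner_le_norm _ _
      rcases (norm_nonneg x).eq_or_lt with h0 | h0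
      · rw [← h0]; exact (norm_nonneg y).trans hM
      · exact (le_of_mul_le_mul_left h' h0).trans hM
    have ha : ‖a‖ ≤ C₂ * ‖T ⟨a, haT⟩‖ := by
      obtain ⟨w, hw, hwe, hwn⟩ := hb₂ ⟨a, hS3mem⟩ haT
      refine canc a w _ (Or.inr ?_) hwn
      rw [hker a haT, hker w hw, hwe]
    have hb : ‖b‖ ≤ C₁ * ‖T† ⟨b, hbA⟩‖ := by
      have h' : ‖b‖ * ‖b‖ ≤ ‖b‖ * (C₁ * ‖T† ⟨b, hbA⟩‖) := by
        have e : ‖b‖ * ‖b‖ = ‖inner ℂ b b‖ := by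
          rw [inner_self_eq_norm_sq_to_K]; simp [sq]
        have e2 : inner ℂ b b = inner ℂ (T† ⟨b, hbA⟩) w₁ := by
          rw [hfa b hbA w₁ hw₁, hw₁e]
        rw [e, e2]
        calc _ ≤ ‖T† ⟨b, hbA⟩‖ * ‖w₁‖ := norm_inner_le_norm _ _
          _ ≤ ‖T† ⟨b, hbA⟩‖ * (C₁ * ‖b‖) := by gcongr
          _ = _ := by ring
      rcases (norm_nonneg b).eq_or_lt with h0 | h0
      · rw [← h0]; positivity
      · exact le_of_mul_le_mul_left h' h0
    rw [hTu, hSu]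
    calc ‖(u : H)‖ = ‖a + b‖ := by rw [hu]
      _ ≤ ‖a‖ + ‖b‖ := norm_add_le _ _
      _ ≤ _ := add_le_add ha hb
  have hB : ∀ (u : V₂) (h1 : (u : H) ∈ T.domain) (h2 : (u : H) ∈ (T†).domain),
      u ∈ LinearMap.range Q.toFun →
      (C₁ ^ 2 + C₂ ^ 2)⁻¹ * ‖(u : H)‖ ^ 2 ≤
        ‖T ⟨(u : H), h1⟩‖ ^ 2 + ‖T† ⟨(u : H), h2⟩‖ ^ 2 := by
    intro u h1 h2 hu
    have h := hA u h1 h2 hu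
    rw [inv_mul_le_iff₀ (by positivity)]
    generalize ‖T ⟨(u : H), h1⟩‖ = p at *
    generalize ‖T† ⟨(u : H), h2⟩‖ = q at *
    calc ‖(u : H)‖ ^ 2 ≤ (C₂ * p + C₁ * q) ^ 2 := by gcongr
      _ ≤ _ := by nlinarith [sq_nonneg (C₂ * q - C₁ * p)]
  refine ⟨(C₁ ^ 2 + C₂ ^ 2)⁻¹, by positivity, hB, ?_⟩
  intro u hu hur
  have huP := (hQ.1 u).1 hu
  obtain ⟨g1, g2, g3, g4⟩ := (hPdom _).1 huP
  have h := hB u g1 g2 hur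
  have hval : ((Q ⟨u, hu⟩ : V₂) : H) = T† ⟨T ⟨u, g1⟩, g3⟩ + T ⟨T† ⟨u, g2⟩, g4⟩ := by
    rw [hQ.2 u hu huP, hPval u huP g1 g2 g3 g4]
  have e1 := hfa _ g3 _ g1
  have e2 := hfa _ g2 _ g4
  have e3 : ‖T ⟨(u : H), g1⟩‖ ^ 2 + ‖T† ⟨(u : H), g2⟩‖ ^ 2 =
      RCLike.re (inner ℂ ((Q ⟨u, hu⟩ : V₂) : H) (u : H)) := by
    rw [hval, inner_add_left, e1, ← inner_conj_symm (T ⟨T† ⟨(u : H), g2⟩, g4⟩), ← e2, map_add,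
      RCLike.conj_re, inner_self_eq_norm_sq, inner_self_eq_norm_sq]
  have e4 : RCLike.re (inner ℂ ((Q ⟨u, hu⟩ : V₂) : H) (u : H)) ≤ ‖Q ⟨u, hu⟩‖ * ‖(u : H)‖ :=
    re_inner_le_norm _ _
  change _ * ‖(u : H)‖ ≤ _
  rcases (norm_nonneg (u : H)).eq_or_lt with h0 | h0
  · rw [← h0]; simp
  · refine le_of_mul_le_mul_right ?_ h0
    rw [mul_assoc, ← sq]
    linarith
end

section
/- The Green operator N = Q⁻¹ : V₂ → V₂, defined by Nu = 0 for u ∈ ker Q and, for u ∈ R(Q), Nu = the unique v ∈ Dom Q ∩ R(Q) with Qv = u, is a well-defined bounded linear operator taking values in Dom Q; it satisfies ‖Nu‖ ≤ c⁻¹‖u‖ (with c the constant of the a priori estimate c‖v‖ ≤ ‖Qv‖ on Dom Q ∩ R(Q)), and Q(Nu) equals the orthogonal projection of u onto R(Q) for every u ∈ V₂. -/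
open scoped LinearPMap

open scoped InnerProductSpace

theorem adj_graph {E F : Type*} [NormedAddCommGroup E] [InnerProductSpace ℂ E] [CompleteSpace E]
    [NormedAddCommGroup F] [InnerProductSpace ℂ F] {A : E →ₗ.[ℂ] F}
    (hd : Dense (A.domain : Set E)) (w : F) (u : E) :
    (w, u) ∈ (A†).graph ↔ ∀ x y, (x, y) ∈ A.graph → ⟪w, y⟫_ℂ = ⟪u, x⟫_ℂ := by
  constructor
  · intro h x y hxy
    obtain ⟨w', hw1, hw2⟩ := (LinearPMap.mem_graph_iff _).1 h
    obtain ⟨x', hx1, hx2⟩ := (LinearPMap.mem_graph_iff _).1 hxy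
    have := LinearPMap.adjoint_isFormalAdjoint hd w' x'
    simp only at hw1 hw2 hx1 hx2
    rw [hw1, hw2, hx1, hx2] at this
    exact this.symm
  · intro h
    have hw : ∀ x : A.domain, ⟪u, (x : E)⟫_ℂ = ⟪w, A x⟫_ℂ := fun x =>
      (h x (A x) (A.mem_graph x)).symm
    have hm : w ∈ (A†).domain := LinearPMap.mem_adjoint_domain_of_exists w ⟨u, hw⟩
    have he := LinearPMap.adjoint_apply_eq hd ⟨w, hm⟩ hw
    have := (A†).mem_graph ⟨w, hm⟩
    rw [he] at this
    exact this

theorem closed_range_aux {E F : Type*} [NormedAddCommGroup E] [InnerProductSpace ℂ E]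
    [CompleteSpace E]
    [NormedAddCommGroup F] [InnerProductSpace ℂ F] [CompleteSpace F] {A : E →ₗ.[ℂ] F}
    (hd : Dense (A.domain : Set E)) (hc : A.IsClosed)
    (hr : IsClosed ((LinearMap.range A.toFun : Submodule ℂ F) : Set F))
    (u : E) (hu : ∀ x, (x, (0 : F)) ∈ A.graph → ⟪u, x⟫_ℂ = 0) :
    ∃ z w, (z, w) ∈ A.graph ∧ (w, u) ∈ (A†).graph := by
  have hc' : IsClosed (A.graph : Set (E × F)) := hc
  haveI : CompleteSpace A.graph := hc'.completeSpace_coe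
  haveI : CompleteSpace (LinearMap.range A.toFun) := hr.completeSpace_coe
  let p : A.graph →L[ℂ] LinearMap.range A.toFun :=
    ((ContinuousLinearMap.snd ℂ E F).comp A.graph.subtypeL).codRestrict _ (by
      rintro ⟨⟨x, y⟩, h⟩
      obtain ⟨x', hx1, hx2⟩ := (LinearPMap.mem_graph_iff _).1 h
      exact ⟨x', hx2⟩)
  have hp : Function.Surjective p := by
    rintro ⟨y, x, rfl⟩
    exact ⟨⟨(x, A x), A.mem_graph x⟩, rfl⟩
  obtain ⟨C, hC0, hC⟩ := p.exists_preimage_norm_le hp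
  let f0 : A.graph →ₗ[ℂ] ℂ :=
    ((innerSL ℂ u).comp ((ContinuousLinearMap.fst ℂ E F).comp A.graph.subtypeL)).toLinearMap
  have hf0 : ∀ g : A.graph, f0 g = ⟪u, (g : E × F).1⟫_ℂ := fun g => rfl
  have hmem : f0 ∈ LinearMap.range (p.toLinearMap.dualMap) := by
    rw [LinearMap.range_dualMap_eq_dualAnnihilator_ker, Submodule.mem_dualAnnihilator]
    rintro ⟨⟨x, y⟩, h⟩ hk
    have hy : y = 0 := congrArg Subtype.val (LinearMap.mem_ker.1 hk)
    subst hy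
    exact hu x h
  obtain ⟨f, hf⟩ := hmem
  have hf' : ∀ g, f (p g) = f0 g := fun g => LinearMap.congr_fun hf g
  let F1 : LinearMap.range A.toFun →L[ℂ] ℂ := LinearMap.mkContinuous f (‖u‖ * C) (by
    intro y
    obtain ⟨g, rfl, hg⟩ := hC y
    rw [hf', hf0]
    calc _ ≤ ‖u‖ * ‖(g : E × F).1‖ := norm_inner_le_norm _ _
      _ ≤ ‖u‖ * (C * ‖p g‖) := by
        gcongr
        exact (norm_fst_le (g : E × F)).trans hg
      _ = _ := by ring)
  obtain ⟨⟨w, z, hz⟩, hw⟩ : ∃ w, ∀ y, ⟪w, y⟫_ℂ = F1 y :=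
    ⟨(InnerProductSpace.toDual ℂ _).symm F1, fun y => InnerProductSpace.toDual_symm_apply⟩
  refine ⟨z, w, ?_, ?_⟩
  · rw [← hz]; exact A.mem_graph z
  · rw [adj_graph hd]
    intro x y hxy
    have h1 := hw (p ⟨(x, y), hxy⟩)
    exact h1.trans (hf' ⟨(x, y), hxy⟩)

theorem ker_decomp {E F : Type*} [NormedAddCommGroup E] [InnerProductSpace ℂ E]
    [CompleteSpace E]
    [NormedAddCommGroup F] [InnerProductSpace ℂ F] {A : E →ₗ.[ℂ] F}
    (hc : A.IsClosed) (x : E) :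
    ∃ k b, (k, (0 : F)) ∈ A.graph ∧ (∀ k', (k', (0 : F)) ∈ A.graph → ⟪b, k'⟫_ℂ = 0) ∧
      x = k + b := by
  have hc' : IsClosed (A.graph : Set (E × F)) := hc
  let K : Submodule ℂ E := A.graph.comap (LinearMap.inl ℂ E F)
  have hK : IsClosed (K : Set E) := hc'.preimage (f := fun x : E => (x, (0 : F))) (by fun_prop)
  haveI : CompleteSpace K := hK.completeSpace_coe
  refine ⟨K.starProjection x, x - K.starProjection x, K.starProjection_apply_mem x, ?_, by abel⟩
  intro k' hk'
  exact (Submodule.mem_orthogonal' _ _).1 (K.sub_starProjection_mem_orthogonal x) k' hk'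

/-- Abstract Hodge decomposition. -/
theorem hodge_aux {E F G : Type*} [NormedAddCommGroup E] [InnerProductSpace ℂ E]
    [CompleteSpace E] [NormedAddCommGroup F] [InnerProductSpace ℂ F] [CompleteSpace F]
    [NormedAddCommGroup G] [InnerProductSpace ℂ G] [CompleteSpace G]
    {A : E →ₗ.[ℂ] F} {B : F →ₗ.[ℂ] G}
    (hAd : Dense (A.domain : Set E)) (hAc : A.IsClosed)
    (hAr : IsClosed ((LinearMap.range A.toFun : Submodule ℂ F) : Set F))
    (hBd : Dense (B.domain : Set F)) (hBc : B.IsClosed)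
    (hBr : IsClosed ((LinearMap.range B.toFun : Submodule ℂ G) : Set G))
    (hBA : ∀ x y, (x, y) ∈ A.graph → (y, (0 : G)) ∈ B.graph)
    (Qr : F → F → Prop)
    (hQr : ∀ x s t p q, (x, s) ∈ (A†).graph → (x, t) ∈ B.graph → (s, p) ∈ A.graph →
      (t, q) ∈ (B†).graph → Qr x (q + p))
    (hadd : ∀ x y x' y', Qr x y → Qr x' y' → Qr (x + x') (y + y')) (u : F) :
    ∃ z v y k, Qr z v ∧ Qr y z ∧ Qr k 0 ∧ u = v + k := by
  have hBA' : ∀ w x, (w, x) ∈ (B†).graph → (x, (0 : E)) ∈ (A†).graph := by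
    intro w x h
    rw [adj_graph hAd]
    intro a b hab
    rw [← (adj_graph hBd w x).1 h b 0 (hBA a b hab)]
    simp
  have h0A : ((0 : E), (0 : F)) ∈ A.graph := A.graph.zero_mem
  have h0B : ((0 : G), (0 : F)) ∈ (B†).graph := (B†).graph.zero_mem
  -- R(A)
  have hRA : ∀ x a, (x, a) ∈ A.graph → ∃ x' a', (x', a') ∈ A.graph ∧ Qr a' a := by
    intro x a h
    obtain ⟨k, b, hk, hb, rfl⟩ := ker_decomp hAc x
    have hba : (b, a) ∈ A.graph := by
      have := A.graph.sub_mem h hk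
      simpa using this
    obtain ⟨z, w, hzw, hwb⟩ := closed_range_aux hAd hAc hAr b hb
    refine ⟨z, w, hzw, ?_⟩
    simpa using hQr w b 0 a 0 hwb (hBA _ _ hzw) hba h0B
  have hRB : ∀ b, (∀ x, (x, (0 : G)) ∈ B.graph → ⟪b, x⟫_ℂ = 0) →
      ∃ b', (∀ x, (x, (0 : G)) ∈ B.graph → ⟪b', x⟫_ℂ = 0) ∧ Qr b' b := by
    intro b hb
    obtain ⟨z, w, hzw, hwb⟩ := closed_range_aux hBd hBc hBr b hb
    obtain ⟨k, b', hk, hb', rfl⟩ := ker_decomp hBc z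
    have hba : (b', w) ∈ B.graph := by
      have := B.graph.sub_mem hzw hk
      simpa using this
    obtain ⟨z2, w2, hzw2, hwb2⟩ := closed_range_aux hBd hBc hBr b' hb'
    refine ⟨b', hb', ?_⟩
    simpa using hQr b' 0 w 0 b (hBA' _ _ hwb2) hba h0A hwb
  haveI : CompleteSpace (LinearMap.range A.toFun) := hAr.completeSpace_coe
  set K := LinearMap.range A.toFun
  obtain ⟨x, hx⟩ : K.starProjection u ∈ K := K.starProjection_apply_mem u
  have ho := K.sub_starProjection_mem_orthogonal u
  set a := K.starProjection u
  have hxa : ((x : E), a) ∈ A.graph := by rw [← hx]; exact A.mem_graph x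
  obtain ⟨k, b, hk, hb, hkb⟩ := ker_decomp hBc (u - a)
  obtain ⟨x1, a1, h1, q1⟩ := hRA _ _ hxa
  obtain ⟨x2, a2, h2, q2⟩ := hRA _ _ h1
  obtain ⟨b1, h1', q1'⟩ := hRB b hb
  obtain ⟨b2, h2', q2'⟩ := hRB b1 h1'
  refine ⟨a1 + b1, a + b, a2 + b2, k, hadd _ _ _ _ q1 q1', hadd _ _ _ _ q2 q2', ?_, ?_⟩
  · have : (k, (0 : E)) ∈ (A†).graph := by
      rw [adj_graph hAd]
      intro c d hcd
      have e1 : ⟪u - a, d⟫_ℂ = 0 := by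
        obtain ⟨c', hc1, hc2⟩ := (LinearPMap.mem_graph_iff _).1 hcd
        exact (Submodule.mem_orthogonal' _ _).1 ho d ⟨c', hc2⟩
      rw [hkb, inner_add_left, hb d (hBA _ _ hcd), add_zero] at e1
      rw [e1]; simp
    simpa using hQr k 0 0 0 0 this hk h0A h0B
  · rw [add_assoc, add_comm b k, ← hkb]; abel

theorem restr_graph {H : Type*} [NormedAddCommGroup H] [InnerProductSpace ℂ H]
    {T : H →ₗ.[ℂ] H} {V W : Submodule ℂ H} {T' : ↥V →ₗ.[ℂ] ↥W} (h : IsRestrictionOf T V W T')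
    (x : V) (y : W) : (x, y) ∈ T'.graph ↔ ((x : H), (y : H)) ∈ T.graph := by
  obtain ⟨h1, h2⟩ := h
  rw [LinearPMap.mem_graph_iff, LinearPMap.mem_graph_iff]
  constructor
  · rintro ⟨⟨x', hx'⟩, rfl, hy⟩
    refine ⟨⟨x', (h1 _).1 hx'⟩, rfl, ?_⟩
    simp only at hy ⊢
    rw [← hy, h2]
  · rintro ⟨⟨x', hx'⟩, hx, hy⟩
    simp only at hx hy
    subst hx
    refine ⟨⟨x, (h1 _).2 hx'⟩, rfl, Subtype.ext ?_⟩
    simp only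
    rw [h2 _ _ hx', hy]

theorem restr_closed {H : Type*} [NormedAddCommGroup H] [InnerProductSpace ℂ H]
    {T : H →ₗ.[ℂ] H} {V W : Submodule ℂ H} {T' : ↥V →ₗ.[ℂ] ↥W} (h : IsRestrictionOf T V W T')
    (hT : T.IsClosed) : T'.IsClosed := by
  have hc' : IsClosed (T.graph : Set (H × H)) := hT
  have := hc'.preimage (f := fun p : V × W => ((p.1 : H), (p.2 : H))) (by fun_prop)
  have e : (T'.graph : Set (V × W)) = (fun p : V × W => ((p.1 : H), (p.2 : H))) ⁻¹' T.graph := by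
    ext ⟨x, y⟩
    exact restr_graph h x y
  show IsClosed (T'.graph : Set (V × W))
  rw [e]; exact this

theorem green_aux {F : Type*} [NormedAddCommGroup F] [InnerProductSpace ℂ F]
    (Q : F →ₗ.[ℂ] F)
    (hsym : ∀ x y x' y', (x, y) ∈ Q.graph → (x', y') ∈ Q.graph → ⟪y, x'⟫_ℂ = ⟪x, y'⟫_ℂ)
    (hdec : ∀ u, ∃ z v y k, (z, v) ∈ Q.graph ∧ (y, z) ∈ Q.graph ∧ (k, (0 : F)) ∈ Q.graph ∧
      u = v + k)
    (c : ℝ) (hc : 0 < c)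
    (hest : ∀ (v : F) (hv : v ∈ Q.domain), v ∈ LinearMap.range Q.toFun →
      c * ‖v‖ ≤ ‖Q ⟨v, hv⟩‖) :
    (∃! N : F →L[ℂ] F,
      (∀ u ∈ (LinearMap.ker Q.toFun).map Q.domain.subtype, N u = 0) ∧
      (∀ u ∈ LinearMap.range Q.toFun, ∃ h : N u ∈ Q.domain,
        N u ∈ LinearMap.range Q.toFun ∧ Q ⟨N u, h⟩ = u)) ∧
    (∀ N : F →L[ℂ] F,
      ((∀ u ∈ (LinearMap.ker Q.toFun).map Q.domain.subtype, N u = 0) ∧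
       (∀ u ∈ LinearMap.range Q.toFun, ∃ h : N u ∈ Q.domain,
         N u ∈ LinearMap.range Q.toFun ∧ Q ⟨N u, h⟩ = u)) →
      ∀ u : F, ∃ h : N u ∈ Q.domain,
        ‖N u‖ ≤ c⁻¹ * ‖u‖ ∧
        Q ⟨N u, h⟩ ∈ LinearMap.range Q.toFun ∧
        u - Q ⟨N u, h⟩ ∈ (LinearMap.range Q.toFun)ᗮ) := by
  have hran : ∀ z, z ∈ LinearMap.range Q.toFun ↔ ∃ y, (y, z) ∈ Q.graph := by
    intro z
    constructor
    · rintro ⟨y, rfl⟩; exact ⟨y, Q.mem_graph y⟩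
    · rintro ⟨y, h⟩
      obtain ⟨y', h1, h2⟩ := (LinearPMap.mem_graph_iff _).1 h
      exact ⟨y', h2⟩
  have hker : ∀ k, k ∈ (LinearMap.ker Q.toFun).map Q.domain.subtype ↔ (k, (0 : F)) ∈ Q.graph := by
    intro k
    rw [LinearPMap.mem_graph_iff]
    constructor
    · rintro ⟨y, h1, rfl⟩; exact ⟨y, rfl, h1⟩
    · rintro ⟨y, h1, h2⟩; exact ⟨y, h2, h1⟩
  have hval : ∀ x y, (x, y) ∈ Q.graph ↔ ∃ h : x ∈ Q.domain, Q ⟨x, h⟩ = y := by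
    intro x y
    rw [LinearPMap.mem_graph_iff]
    constructor
    · rintro ⟨⟨y, hy⟩, rfl, h2⟩; exact ⟨hy, h2⟩
    · rintro ⟨h, h2⟩; exact ⟨⟨x, h⟩, rfl, h2⟩
  have hest' : ∀ z v y, (z, v) ∈ Q.graph → (y, z) ∈ Q.graph → c * ‖z‖ ≤ ‖v‖ := by
    intro z v y h1 h2
    obtain ⟨h, rfl⟩ := (hval _ _).1 h1
    exact hest z h ((hran z).2 ⟨y, h2⟩)
  have horth : ∀ z v k, (z, v) ∈ Q.graph → (k, (0 : F)) ∈ Q.graph → ⟪v, k⟫_ℂ = 0 := by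
    intro z v k h1 h2
    rw [hsym _ _ _ _ h1 h2, inner_zero_right]
  have hbd : ∀ z v y k, (z, v) ∈ Q.graph → (y, z) ∈ Q.graph → (k, (0 : F)) ∈ Q.graph →
      ‖z‖ ≤ c⁻¹ * ‖v + k‖ := by
    intro z v y k h1 h2 h3
    have e := norm_add_sq_eq_norm_sq_add_norm_sq_of_inner_eq_zero v k (horth z v k h1 h3)
    have e2 : ‖v‖ ≤ ‖v + k‖ := by
      apply le_of_not_gt; intro hlt; nlinarith [norm_nonneg (v + k), norm_nonneg v, norm_nonneg k]
    rw [inv_mul_eq_div, le_div_iff₀ hc, mul_comm]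
    exact (hest' z v y h1 h2).trans e2
  choose z v y k hz hy hk hu using hdec
  have huniq : ∀ u z' v' y' k', (z', v') ∈ Q.graph → (y', z') ∈ Q.graph →
      (k', (0 : F)) ∈ Q.graph → u = v' + k' → z u = z' := by
    intro u z' v' y' k' h1 h2 h3 h4
    have := hbd (z u - z') (v u - v') (y u - y') (k u - k') (Q.graph.sub_mem (hz u) h1)
      (Q.graph.sub_mem (hy u) h2) (by simpa using Q.graph.sub_mem (hk u) h3)
    have e : v u - v' + (k u - k') = 0 := by
      have e1 : v u + k u = v' + k' := (hu u).symm.trans h4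
      rw [sub_add_sub_comm, e1, sub_self]
    rw [e, norm_zero, mul_zero] at this
    exact sub_eq_zero.1 (norm_le_zero_iff.1 this)
  have hspec : ∀ N : F →L[ℂ] F,
      ((∀ u ∈ (LinearMap.ker Q.toFun).map Q.domain.subtype, N u = 0) ∧
       (∀ u ∈ LinearMap.range Q.toFun, ∃ h : N u ∈ Q.domain,
         N u ∈ LinearMap.range Q.toFun ∧ Q ⟨N u, h⟩ = u)) → ∀ u, N u = z u := by
    rintro N ⟨hN1, hN2⟩ u
    obtain ⟨h, h2, h3⟩ := hN2 (v u) ((hran _).2 ⟨_, hz u⟩)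
    obtain ⟨y', hy'⟩ := (hran _).1 h2
    have e : N u = N (v u) := by
      conv_lhs => rw [hu u]
      rw [map_add, hN1 (k u) ((hker _).2 (hk u)), add_zero]
    rw [e]
    exact (huniq u (N (v u)) (v u) y' (k u) ((hval _ _).2 ⟨h, h3⟩) hy' (hk u) (hu u)).symm
  refine ⟨?_, ?_⟩
  · let N : F →L[ℂ] F := LinearMap.mkContinuous
      { toFun := z
        map_add' := fun a b => huniq (a + b) (z a + z b) (v a + v b) (y a + y b) (k a + k b)
          (Q.graph.add_mem (hz a) (hz b)) (Q.graph.add_mem (hy a) (hy b))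
          (by simpa using Q.graph.add_mem (hk a) (hk b))
          (by rw [add_add_add_comm, ← hu a, ← hu b])
        map_smul' := fun r a => huniq (r • a) (r • z a) (r • v a) (r • y a) (r • k a)
          (Q.graph.smul_mem r (hz a)) (Q.graph.smul_mem r (hy a))
          (by simpa using Q.graph.smul_mem r (hk a))
          (by rw [← smul_add, ← hu a]) } c⁻¹ (by
        intro u
        have := hbd _ _ _ _ (hz u) (hy u) (hk u)
        rw [← hu u] at this
        exact this)
    have hN : ∀ u, N u = z u := fun u => rfl
    refine ⟨N, ⟨?_, ?_⟩, ?_⟩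
    · intro u h
      rw [hN]
      exact huniq u 0 0 0 u Q.graph.zero_mem Q.graph.zero_mem ((hker _).1 h) (by simp)
    · intro u h
      rw [hN]
      have hku : k u = 0 := by
        obtain ⟨x, hx⟩ := (hran _).1 h
        have e := horth _ _ (k u) (Q.graph.sub_mem hx (hz u)) (hk u)
        have e2 : u - v u = k u := sub_eq_of_eq_add' (hu u)
        simp only [e2] at e
        exact inner_self_eq_zero.1 e
      obtain ⟨h1, h2⟩ := (hval _ _).1 (hz u)
      refine ⟨h1, (hran _).2 ⟨_, hy u⟩, ?_⟩
      rw [h2]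
      conv_rhs => rw [hu u, hku, add_zero]
    · intro N' hN'
      ext u
      rw [hspec N' hN' u, hN]
  · intro N hN u
    rw [hspec N hN u]
    obtain ⟨h1, h2⟩ := (hval _ _).1 (hz u)
    refine ⟨h1, ?_, ⟨_, rfl⟩, ?_⟩
    · have := hbd _ _ _ _ (hz u) (hy u) (hk u)
      rwa [← hu u] at this
    · rw [h2, Submodule.mem_orthogonal]
      intro w hw
      obtain ⟨x, hx⟩ := (hran _).1 hw
      rw [sub_eq_of_eq_add' (hu u)]
      exact horth _ _ _ hx (hk u)

theorem stmt_8 {H : Type*} [NormedAddCommGroup H] [InnerProductSpace ℂ H] [CompleteSpace H]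
    -- `T` is closed and densely defined, with range contained in `Dom T` and `T² = 0`
    (T : H →ₗ.[ℂ] H) (hTd : Dense (T.domain : Set H)) (hTc : T.IsClosed)
    (hTr : ∀ u : T.domain, T u ∈ T.domain)
    (hT2 : ∀ u : T.domain, T ⟨T u, hTr u⟩ = 0)
    -- `P = T*T + TT*` with its natural domain; `P` is self-adjoint
    (P : H →ₗ.[ℂ] H)
    (hPdom : ∀ x : H, x ∈ P.domain ↔
      ∃ (h1 : x ∈ T.domain) (h2 : x ∈ (T†).domain),
        T ⟨x, h1⟩ ∈ (T†).domain ∧ T† ⟨x, h2⟩ ∈ T.domain)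
    (hPval : ∀ (x : H) (hx : x ∈ P.domain) (h1 : x ∈ T.domain) (h2 : x ∈ (T†).domain)
      (h3 : T ⟨x, h1⟩ ∈ (T†).domain) (h4 : T† ⟨x, h2⟩ ∈ T.domain),
      P ⟨x, hx⟩ = T† ⟨T ⟨x, h1⟩, h3⟩ + T ⟨T† ⟨x, h2⟩, h4⟩)
    (hPsa : IsSelfAdjoint P)
    -- the closed subspaces `V₁, V₂, V₃`
    (V₁ V₂ V₃ : Submodule ℂ H)
    (hV₁ : IsClosed (V₁ : Set H)) (hV₂ : IsClosed (V₂ : Set H)) (hV₃ : IsClosed (V₃ : Set H))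
    [CompleteSpace V₁] [CompleteSpace V₂] [CompleteSpace V₃]
    -- `T₁ = T|_{V₁} : V₁ ⇀ V₂` and `T₂ = T|_{V₂} : V₂ ⇀ V₃`, densely defined with closed range
    (T₁ : ↥V₁ →ₗ.[ℂ] ↥V₂) (hT₁ : IsRestrictionOf T V₁ V₂ T₁)
    (hT₁d : Dense (T₁.domain : Set V₁))
    (T₂ : ↥V₂ →ₗ.[ℂ] ↥V₃) (hT₂ : IsRestrictionOf T V₂ V₃ T₂)
    (hT₂d : Dense (T₂.domain : Set V₂))
    (hR₁ : IsClosed ((LinearMap.range T₁.toFun : Submodule ℂ V₂) : Set V₂))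
    (hR₂ : IsClosed ((LinearMap.range T₂.toFun : Submodule ℂ V₃) : Set V₃))
    -- `S₂ = T*|_{V₂} : V₂ ⇀ V₁` and `S₃ = T*|_{V₃} : V₃ ⇀ V₂`; the adjoint of `T|_{V₁}` is
    -- `T*|_{V₂}` and the adjoint of `T|_{V₂}` is `T*|_{V₃}`
    (S₂ : ↥V₂ →ₗ.[ℂ] ↥V₁) (hS₂ : IsRestrictionOf (T†) V₂ V₁ S₂)
    (S₃ : ↥V₃ →ₗ.[ℂ] ↥V₂) (hS₃ : IsRestrictionOf (T†) V₃ V₂ S₃)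
    (hadj₁ : T₁† = S₂) (hadj₂ : T₂† = S₃)
    -- `Q = P|_{V₂}`
    (Q : ↥V₂ →ₗ.[ℂ] ↥V₂) (hQ : IsRestrictionOf P V₂ V₂ Q)
    -- the constant of the a priori estimate `c‖v‖ ≤ ‖Qv‖` on `Dom Q ∩ R(Q)`
    (c : ℝ) (hc : 0 < c)
    (hest : ∀ (v : V₂) (hv : v ∈ Q.domain), v ∈ LinearMap.range Q.toFun →
      c * ‖v‖ ≤ ‖Q ⟨v, hv⟩‖) :
    -- the Green operator `N = Q⁻¹` is a well-defined bounded linear operator: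
    (∃! N : V₂ →L[ℂ] V₂,
      (∀ u ∈ (LinearMap.ker Q.toFun).map Q.domain.subtype, N u = 0) ∧
      (∀ u ∈ LinearMap.range Q.toFun, ∃ h : N u ∈ Q.domain,
        N u ∈ LinearMap.range Q.toFun ∧ Q ⟨N u, h⟩ = u)) ∧
    -- it takes values in `Dom Q`, satisfies `‖Nu‖ ≤ c⁻¹‖u‖`, and `Q(Nu)` is the orthogonal
    -- projection of `u` onto `R(Q)`
    (∀ N : V₂ →L[ℂ] V₂,
      ((∀ u ∈ (LinearMap.ker Q.toFun).map Q.domain.subtype, N u = 0) ∧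
       (∀ u ∈ LinearMap.range Q.toFun, ∃ h : N u ∈ Q.domain,
         N u ∈ LinearMap.range Q.toFun ∧ Q ⟨N u, h⟩ = u)) →
      ∀ u : V₂, ∃ h : N u ∈ Q.domain,
        ‖N u‖ ≤ c⁻¹ * ‖u‖ ∧
        Q ⟨N u, h⟩ ∈ LinearMap.range Q.toFun ∧
        u - Q ⟨N u, h⟩ ∈ (LinearMap.range Q.toFun)ᗮ) := by
  have hsymP : ∀ x y x' y', (x, y) ∈ P.graph → (x', y') ∈ P.graph →
      ⟪y, x'⟫_ℂ = ⟪x, y'⟫_ℂ := by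
    intro x y x' y' h h'
    have hP : P† = P := hPsa
    have h2 := h
    rw [← hP] at h2
    exact ((adj_graph hPsa.dense_domain x y).1 h2 x' y' h').symm
  refine green_aux Q ?_ ?_ c hc hest
  · intro x y x' y' h h'
    exact hsymP _ _ _ _ ((restr_graph hQ _ _).1 h) ((restr_graph hQ _ _).1 h')
  · refine hodge_aux hT₁d (restr_closed hT₁ hTc) hR₁ hT₂d (restr_closed hT₂ hTc) hR₂ ?_
      (fun x y => (x, y) ∈ Q.graph) ?_ ?_
    · intro x y h
      rw [restr_graph hT₂]
      obtain ⟨x', hx1, hx2⟩ := (LinearPMap.mem_graph_iff _).1 ((restr_graph hT₁ _ _).1 h)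
      simp only at hx2
      rw [← hx2]
      have := T.mem_graph ⟨T x', hTr x'⟩
      rw [hT2 x'] at this
      exact this
    · intro x s t p q h1 h2 h3 h4
      rw [hadj₁, restr_graph hS₂] at h1
      rw [hadj₂, restr_graph hS₃] at h4
      rw [restr_graph hT₂] at h2
      rw [restr_graph hT₁] at h3
      rw [restr_graph hQ]
      obtain ⟨x1, a1, b1⟩ := (LinearPMap.mem_graph_iff _).1 h1
      obtain ⟨x2, a2, b2⟩ := (LinearPMap.mem_graph_iff _).1 h2
      obtain ⟨x3, a3, b3⟩ := (LinearPMap.mem_graph_iff _).1 h3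
      obtain ⟨x4, a4, b4⟩ := (LinearPMap.mem_graph_iff _).1 h4
      simp only at a1 b1 a2 b2 a3 b3 a4 b4
      have m1 : (x : H) ∈ T.domain := a2 ▸ x2.2
      have m2 : (x : H) ∈ (T†).domain := a1 ▸ x1.2
      have e1 : T ⟨x, m1⟩ = t := by rw [← b2]; congr 1; exact Subtype.ext a2.symm
      have e2 : T† ⟨x, m2⟩ = s := by rw [← b1]; congr 1; exact Subtype.ext a1.symm
      have m3 : T ⟨x, m1⟩ ∈ (T†).domain := by rw [e1, ← a4]; exact x4.2
      have m4 : T† ⟨x, m2⟩ ∈ T.domain := by rw [e2, ← a3]; exact x3.2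
      have mP : (x : H) ∈ P.domain := (hPdom _).2 ⟨m1, m2, m3, m4⟩
      have e := hPval x mP m1 m2 m3 m4
      have e3 : T† ⟨T ⟨x, m1⟩, m3⟩ = q := by
        rw [← b4]; congr 1; exact Subtype.ext (e1.trans a4.symm)
      have e4 : T ⟨T† ⟨x, m2⟩, m4⟩ = p := by
        rw [← b3]; congr 1; exact Subtype.ext (e2.trans a3.symm)
      rw [e3, e4] at e
      rw [LinearPMap.mem_graph_iff]
      exact ⟨⟨x, mP⟩, rfl, by rw [e]; rfl⟩
    · intro x y x' y' h h'
      exact Q.graph.add_mem h h'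
end

section
/- The Green operator N = Q⁻¹ : V₂ → V₂ is compact if and only if the inclusion j : D → V₂ of the Hilbert space D (equipped with the norm ‖u‖_D² = ‖Tu‖² + ‖T*u‖²) into V₂ is a compact operator. -/
open scoped LinearPMap

theorem aux_compact {E : Type*} [NormedAddCommGroup E] [InnerProductSpace ℂ E] [CompleteSpace E]
    (N : E →L[ℂ] E) (R : Submodule ℂ E) (b : ℝ → E → Prop)
    (h1 : ∀ t u, b t u → ‖u‖ ^ 3 ≤ ‖N u‖ * t)
    (h2 : ∀ u ∈ R, b (‖u‖ * ‖N u‖) (N u))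
    (h3 : ∀ u v, b 1 u → b 1 v → b 4 (u - v))
    (h4 : ∀ t u (c : ℝ), 0 < c → t ≤ c ^ 2 → b t u → b 1 (((c : ℂ)⁻¹) • u))
    (h5 : ∀ u ∈ Rᗮ, N u = 0) :
    IsCompactOperator (⇑N : E → E) ↔ IsCompact (closure {u : E | b 1 u}) := by
  constructor
  · intro hN
    apply TotallyBounded.isCompact_of_isClosed _ isClosed_closure
    apply TotallyBounded.closure
    have hbd : ∀ u, b 1 u → ‖u‖ ≤ ‖N‖ + 1 := by
      intro u hu
      have := h1 1 u hu
      have h' := N.le_opNorm u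
      by_contra hc
      push Not at hc
      have hn := norm_nonneg N
      nlinarith [mul_pos (show (0:ℝ) < ‖u‖ by linarith) (show (0:ℝ) < ‖u‖ by linarith),
        mul_pos (show (0:ℝ) < ‖u‖ by linarith) (show (0:ℝ) < ‖u‖ - ‖N‖ by linarith),
        mul_pos (show (0:ℝ) < ‖u‖ by linarith) (mul_pos (show (0:ℝ) < ‖u‖ by linarith) (show (0:ℝ) < ‖u‖ - 1 by linarith))]
    have hK : IsCompact (closure (N '' Metric.closedBall 0 (‖N‖ + 1))) :=
      IsCompactOperator.isCompact_closure_image_closedBall (f := N.toLinearMap) hN _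
    have htb : TotallyBounded (N '' {u : E | b 1 u}) := by
      refine (hK.totallyBounded.subset subset_closure).subset (Set.image_mono ?_)
      intro u hu
      simpa using hbd u hu
    rw [Metric.totallyBounded_iff]
    intro ε hε
    obtain ⟨t, ht, htf, hc⟩ := 
      totallyBounded_iff_subset.mp htb _ (Metric.dist_mem_uniformity (show (0:ℝ) < ε ^ 3 / 4 by positivity))
    obtain ⟨s, hs, hsf, hst⟩ := (Set.exists_subset_image_finite_and (p := fun w => w = t)).mp ⟨t, ht, htf, rfl⟩
    refine ⟨s, hsf, ?_⟩
    intro u hu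
    have := hc (Set.mem_image_of_mem _ hu)
    simp only [Set.mem_iUnion] at this ⊢
    obtain ⟨y, hy, hyu⟩ := this
    rw [← hst] at hy
    obtain ⟨v, hv, rfl⟩ := hy
    refine ⟨v, hv, ?_⟩
    have h6 := h1 4 _ (h3 u v hu (hs hv))
    have h7 : ‖N u - N v‖ < ε ^ 3 / 4 := by simpa [dist_eq_norm] using hyu
    rw [Metric.mem_ball, dist_eq_norm]
    rw [map_sub] at h6
    exact lt_of_pow_lt_pow_left₀ 3 hε.le (by linarith)
  · intro hB
    set c : ℝ := ‖N‖ + 1 with hc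
    have hn := norm_nonneg N
    have hc0 : 0 < c := by positivity
    have hK : IsCompact ((fun x : E => (c : ℂ) • x) '' closure {u : E | b 1 u}) :=
      hB.image (continuous_const_smul _)
    refine ⟨_, hK, ?_⟩
    refine Filter.mem_of_superset (Metric.ball_mem_nhds (0:E) one_pos) ?_
    have hS : Metric.ball (0:E) 1 ∩ R ⊆ N ⁻¹' ((fun x : E => (c : ℂ) • x) '' closure {u : E | b 1 u}) := by
      rintro u ⟨hu, hR⟩
      have hu : ‖u‖ < 1 := by simpa using hu
      have h' := N.le_opNorm u
      refine ⟨((c : ℂ)⁻¹) • N u, subset_closure (h4 _ _ c hc0 ?_ (h2 u hR)), ?_⟩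
      · have : ‖N u‖ ≤ ‖N‖ := by nlinarith [norm_nonneg u]
        nlinarith [norm_nonneg u, norm_nonneg (N u)]
      · have : (c : ℂ) ≠ 0 := by exact_mod_cast hc0.ne'
        simp [smul_smul, this]
    have hS' := closure_minimal hS (hK.isClosed.preimage N.continuous)
    intro u hu
    have hu : ‖u‖ < 1 := by simpa using hu
    obtain ⟨r, hr, k, hk, hrk⟩ := R.topologicalClosure.exists_add_mem_mem_orthogonal u
    have hk' : k ∈ Rᗮ := by rwa [Submodule.orthogonal_closure] at hk
    have hNu : N u = N r := by rw [hrk, map_add, h5 k hk', add_zero]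
    have hrn : ‖r‖ < 1 := by
      have : ‖u‖ * ‖u‖ = ‖r‖ * ‖r‖ + ‖k‖ * ‖k‖ := by
        rw [hrk]
        exact norm_add_sq_eq_norm_sq_add_norm_sq_of_inner_eq_zero r k (hk r hr)
      nlinarith [norm_nonneg r, norm_nonneg u, norm_nonneg k]
    have : r ∈ closure (Metric.ball (0:E) 1 ∩ R) :=
      Metric.isOpen_ball.inter_closure ⟨by simpa using hrn, hr⟩
    have := hS' this
    rw [Set.mem_preimage] at this ⊢
    rwa [hNu]

theorem aux_proj {E F : Type*} [NormedAddCommGroup E] [InnerProductSpace ℂ E] [CompleteSpace E]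
    [NormedAddCommGroup F] [InnerProductSpace ℂ F] [CompleteSpace F]
    (A : E →ₗ.[ℂ] F) (hd : Dense (A.domain : Set E)) (hc : A.IsClosed) (f : E) (g : F) :
    ∃ (b : A.domain) (h : A b - g ∈ (A†).domain), A† ⟨A b - g, h⟩ = f - b := by
  let e := WithLp.prodContinuousLinearEquiv 2 ℂ E F
  let G : Submodule ℂ (WithLp 2 (E × F)) := A.graph.comap e.toLinearMap
  have hG : IsClosed (G : Set (WithLp 2 (E × F))) := by
    have : IsClosed (A.graph : Set (E × F)) := hc
    exact this.preimage e.continuous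
  haveI : CompleteSpace G := hG.completeSpace_coe
  obtain ⟨y, hy, z, hz, hyz⟩ := G.exists_add_mem_mem_orthogonal (WithLp.toLp 2 (f, g))
  have hy' : (y.fst, y.snd) ∈ A.graph := hy
  rw [LinearPMap.mem_graph_iff] at hy'
  obtain ⟨b, hb1, hb2⟩ := hy'
  simp only at hb1 hb2
  have hz1 : z.fst = f - b := by
    have := congrArg (fun w => w.fst) hyz
    simp at this
    rw [this, hb1]; abel
  have hz2 : z.snd = g - A b := by
    have := congrArg (fun w => w.snd) hyz
    simp at this
    rw [this, hb2]; abel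
  have key : ∀ x : A.domain, inner ℂ (f - b : E) (x : E) = inner ℂ (A b - g) (A x) := by
    intro x
    have hx : WithLp.toLp 2 ((x : E), A x) ∈ G := by
      change ((x : E), A x) ∈ A.graph
      exact A.mem_graph x
    have := G.inner_left_of_mem_orthogonal hx hz
    rw [WithLp.prod_inner_apply] at this
    have h2 : inner ℂ (g - A b) (A x) = - inner ℂ (A b - g) (A x) := by
      rw [← inner_neg_left, neg_sub]
    change inner ℂ z.fst (x : E) + inner ℂ z.snd (A x) = 0 at this
    rw [hz1, hz2, h2] at this
    linear_combination this
  have hmem : A b - g ∈ (A†).domain := LinearPMap.mem_adjoint_domain_of_exists _ ⟨f - b, key⟩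
  exact ⟨b, hmem, LinearPMap.adjoint_apply_eq hd _ key⟩

theorem stmt_10 {H : Type*} [NormedAddCommGroup H] [InnerProductSpace ℂ H] [CompleteSpace H]
    -- `T` is closed and densely defined, with range contained in `Dom T` and `T² = 0`
    (T : H →ₗ.[ℂ] H) (hTd : Dense (T.domain : Set H)) (hTc : T.IsClosed)
    (hTr : ∀ u : T.domain, T u ∈ T.domain)
    (hT2 : ∀ u : T.domain, T ⟨T u, hTr u⟩ = 0)
    -- `P = T*T + TT*` with its natural domain; `P` is self-adjoint
    (P : H →ₗ.[ℂ] H)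
    (hPdom : ∀ x : H, x ∈ P.domain ↔
      ∃ (h1 : x ∈ T.domain) (h2 : x ∈ (T†).domain),
        T ⟨x, h1⟩ ∈ (T†).domain ∧ T† ⟨x, h2⟩ ∈ T.domain)
    (hPval : ∀ (x : H) (hx : x ∈ P.domain) (h1 : x ∈ T.domain) (h2 : x ∈ (T†).domain)
      (h3 : T ⟨x, h1⟩ ∈ (T†).domain) (h4 : T† ⟨x, h2⟩ ∈ T.domain),
      P ⟨x, hx⟩ = T† ⟨T ⟨x, h1⟩, h3⟩ + T ⟨T† ⟨x, h2⟩, h4⟩)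
    (hPsa : IsSelfAdjoint P)
    -- the closed subspaces `V₁, V₂, V₃`
    (V₁ V₂ V₃ : Submodule ℂ H)
    (hV₁ : IsClosed (V₁ : Set H)) (hV₂ : IsClosed (V₂ : Set H)) (hV₃ : IsClosed (V₃ : Set H))
    [CompleteSpace V₁] [CompleteSpace V₂] [CompleteSpace V₃]
    -- `T₁ = T|_{V₁} : V₁ ⇀ V₂` and `T₂ = T|_{V₂} : V₂ ⇀ V₃`, densely defined with closed range
    (T₁ : ↥V₁ →ₗ.[ℂ] ↥V₂) (hT₁ : IsRestrictionOf T V₁ V₂ T₁)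
    (hT₁d : Dense (T₁.domain : Set V₁))
    (T₂ : ↥V₂ →ₗ.[ℂ] ↥V₃) (hT₂ : IsRestrictionOf T V₂ V₃ T₂)
    (hT₂d : Dense (T₂.domain : Set V₂))
    (hR₁ : IsClosed ((LinearMap.range T₁.toFun : Submodule ℂ V₂) : Set V₂))
    (hR₂ : IsClosed ((LinearMap.range T₂.toFun : Submodule ℂ V₃) : Set V₃))
    -- `S₂ = T*|_{V₂} : V₂ ⇀ V₁` and `S₃ = T*|_{V₃} : V₃ ⇀ V₂`; the adjoint of `T|_{V₁}` is
    -- `T*|_{V₂}` and the adjoint of `T|_{V₂}` is `T*|_{V₃}`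
    (S₂ : ↥V₂ →ₗ.[ℂ] ↥V₁) (hS₂ : IsRestrictionOf (T†) V₂ V₁ S₂)
    (S₃ : ↥V₃ →ₗ.[ℂ] ↥V₂) (hS₃ : IsRestrictionOf (T†) V₃ V₂ S₃)
    (hadj₁ : T₁† = S₂) (hadj₂ : T₂† = S₃)
    -- `Q = P|_{V₂}`
    (Q : ↥V₂ →ₗ.[ℂ] ↥V₂) (hQ : IsRestrictionOf P V₂ V₂ Q)
    -- `N = Q⁻¹` is the Green operator
    (N : V₂ →L[ℂ] V₂)
    (hN0 : ∀ u ∈ (LinearMap.ker Q.toFun).map Q.domain.subtype, N u = 0)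
    (hNR : ∀ u ∈ LinearMap.range Q.toFun, ∃ h : N u ∈ Q.domain,
      N u ∈ LinearMap.range Q.toFun ∧ Q ⟨N u, h⟩ = u) :
    -- `N` is compact iff the inclusion `j : D → V₂` is compact, i.e. iff the closed unit ball
    -- of `D = Dom T ∩ Dom T* ∩ R(Q)` for the norm `‖u‖_D² = ‖Tu‖² + ‖T*u‖²` is relatively
    -- compact in `V₂`
    (IsCompactOperator (⇑N : V₂ → V₂) ↔
      IsCompact (closure {u : V₂ | ∃ (h1 : (u : H) ∈ T.domain) (h2 : (u : H) ∈ (T†).domain),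
        u ∈ LinearMap.range Q.toFun ∧
          ‖T ⟨(u : H), h1⟩‖ ^ 2 + ‖T† ⟨(u : H), h2⟩‖ ^ 2 ≤ 1})) := by
  have hTfa := LinearPMap.adjoint_isFormalAdjoint hTd
  have hT₁fa := LinearPMap.adjoint_isFormalAdjoint hT₁d
  have hT₂fa := LinearPMap.adjoint_isFormalAdjoint hT₂d
  rw [hadj₁] at hT₁fa
  rw [hadj₂] at hT₂fa
  -- the basic identity
  have hform : ∀ (u : V₂) (hu : u ∈ Q.domain), ∃ (a1 : (u : H) ∈ T.domain)
      (a2 : (u : H) ∈ (T†).domain), ∀ (v : V₂) (b1 : (v : H) ∈ T.domain)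
      (b2 : (v : H) ∈ (T†).domain), inner ℂ (Q ⟨u, hu⟩) v =
        inner ℂ (T ⟨u, a1⟩) (T ⟨v, b1⟩) + inner ℂ (T† ⟨u, a2⟩) (T† ⟨v, b2⟩) := by
    intro u hu
    have hP := (hQ.1 u).1 hu
    obtain ⟨a1, a2, a3, a4⟩ := (hPdom u).1 hP
    refine ⟨a1, a2, fun v b1 b2 => ?_⟩
    rw [Submodule.coe_inner, hQ.2 u hu hP, hPval u hP a1 a2 a3 a4, inner_add_left]
    have e1 := hTfa ⟨T ⟨u, a1⟩, a3⟩ ⟨v, b1⟩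
    have e2 := hTfa ⟨v, b2⟩ ⟨T† ⟨u, a2⟩, a4⟩
    simp only at e1 e2
    rw [e1, ← inner_conj_symm (T _) (v : H), ← e2, inner_conj_symm]
  -- solvability of `(1 + Q) y = x`
  have hT₂c : T₂.IsClosed := by
    have hTc' : IsClosed (T.graph : Set (H × H)) := hTc
    have : (T₂.graph : Set (V₂ × V₃)) =
        (fun p : V₂ × V₃ => ((p.1 : H), (p.2 : H))) ⁻¹' (T.graph : Set (H × H)) := by
      ext ⟨p, q⟩
      simp only [Set.mem_preimage, SetLike.mem_coe, LinearPMap.mem_graph_iff]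
      constructor
      · rintro ⟨y, rfl, rfl⟩
        exact ⟨⟨y, (hT₂.1 _).1 y.2⟩, rfl, (hT₂.2 _ y.2 _).symm⟩
      · rintro ⟨y, h1, h2⟩
        have hy : (p : H) ∈ T.domain := h1 ▸ y.2
        have hye : y = ⟨p, hy⟩ := Subtype.ext h1
        refine ⟨⟨p, (hT₂.1 _).2 hy⟩, rfl, Subtype.ext ?_⟩
        rw [hT₂.2 _ _ hy, ← hye]
        exact h2
    change IsClosed (T₂.graph : Set (V₂ × V₃))
    rw [this]
    exact hTc'.preimage (by fun_prop)
  have hT₁c : T₁.IsClosed := by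
    have hTc' : IsClosed (T.graph : Set (H × H)) := hTc
    have : (T₁.graph : Set (V₁ × V₂)) =
        (fun p : V₁ × V₂ => ((p.1 : H), (p.2 : H))) ⁻¹' (T.graph : Set (H × H)) := by
      ext ⟨p, q⟩
      simp only [Set.mem_preimage, SetLike.mem_coe, LinearPMap.mem_graph_iff]
      constructor
      · rintro ⟨y, rfl, rfl⟩
        exact ⟨⟨y, (hT₁.1 _).1 y.2⟩, rfl, (hT₁.2 _ y.2 _).symm⟩
      · rintro ⟨y, h1, h2⟩
        have hy : (p : H) ∈ T.domain := h1 ▸ y.2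
        have hye : y = ⟨p, hy⟩ := Subtype.ext h1
        refine ⟨⟨p, (hT₁.1 _).2 hy⟩, rfl, Subtype.ext ?_⟩
        rw [hT₁.2 _ _ hy, ← hye]
        exact h2
    change IsClosed (T₁.graph : Set (V₁ × V₂))
    rw [this]
    exact hTc'.preimage (by fun_prop)
  have hsurj : ∀ x : V₂, ∃ y : Q.domain, (y : V₂) + Q y = x := by
    intro x
    let K : Submodule ℂ V₂ := T₂.graph.comap (LinearMap.inl ℂ V₂ V₃)
    have hKmem : ∀ w : V₂, w ∈ K ↔ ∃ h : w ∈ T₂.domain, T₂ ⟨w, h⟩ = 0 := by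
      intro w
      change (w, (0 : V₃)) ∈ T₂.graph ↔ _
      rw [LinearPMap.mem_graph_iff]
      constructor
      · rintro ⟨y, h1, h2⟩
        simp only at h1 h2
        subst h1
        exact ⟨y.2, h2⟩
      · rintro ⟨h, h'⟩
        exact ⟨⟨w, h⟩, rfl, h'⟩
    have hKc : IsClosed (K : Set V₂) := by
      have : IsClosed (T₂.graph : Set (V₂ × V₃)) := hT₂c
      exact this.preimage (f := fun w : V₂ => (w, (0 : V₃))) (by fun_prop)
    have hTK : ∀ a : T₁.domain, T₁ a ∈ K := by
      intro a
      rw [hKmem]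
      have e := hT₁.2 a a.2 ((hT₁.1 _).1 a.2)
      have hd : ((T₁ a : V₂) : H) ∈ T.domain := by
        rw [show ((T₁ a : V₂) : H) = _ from e]; exact hTr _
      refine ⟨(hT₂.1 _).2 hd, Subtype.ext ?_⟩
      rw [hT₂.2 _ _ hd]
      have := hT2 ⟨a, (hT₁.1 _).1 a.2⟩
      simp only [ZeroMemClass.coe_zero]
      rw [← this]
      congr 1
      exact Subtype.ext e
    haveI : CompleteSpace K := hKc.completeSpace_coe
    obtain ⟨p, hp, q, hq, hpq⟩ := K.exists_add_mem_mem_orthogonal x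
    -- the two equations
    obtain ⟨a, ha, hae⟩ := aux_proj T₁ hT₁d hT₁c 0 p
    obtain ⟨c, hcm, hce⟩ := aux_proj T₂ hT₂d hT₂c q 0
    -- b = p - T₁ a
    have hbP : ∃ y : Q.domain, (y : V₂) + Q y = p := by
      subst hadj₁
      have hm : p - T₁ a ∈ (T₁†).domain := by
        rw [← neg_sub]; exact neg_mem ha
      have hme : T₁† ⟨p - T₁ a, hm⟩ = a := by
        have : (⟨p - T₁ a, hm⟩ : (T₁†).domain) = -⟨T₁ a - p, ha⟩ := Subtype.ext (neg_sub _ _).symm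
        rw [this, LinearPMap.map_neg, hae]; simp
      obtain ⟨k1, k2⟩ := (hKmem _).1 (sub_mem hp (hTK a))
      have a1 := (hT₂.1 _).1 k1
      have a2 := (hS₂.1 _).1 hm
      have e1 : T ⟨_, a1⟩ = 0 := by rw [← hT₂.2 _ k1 a1, k2]; rfl
      have e2 : T† ⟨_, a2⟩ = ((a : V₁) : H) := by rw [← hS₂.2 _ hm a2, hme]
      have a3 : T ⟨_, a1⟩ ∈ (T†).domain := by rw [e1]; exact zero_mem _
      have haT := (hT₁.1 _).1 a.2
      have a4 : T† ⟨_, a2⟩ ∈ T.domain := by rw [e2]; exact haT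
      have hPd := (hPdom _).2 ⟨a1, a2, a3, a4⟩
      refine ⟨⟨p - T₁ a, (hQ.1 _).2 hPd⟩, Subtype.ext ?_⟩
      rw [Submodule.coe_add, hQ.2 _ _ hPd, hPval _ hPd a1 a2 a3 a4]
      have e3 : T† ⟨T ⟨_, a1⟩, a3⟩ = 0 := by
        rw [show (⟨T ⟨_, a1⟩, a3⟩ : (T†).domain) = 0 from Subtype.ext e1, LinearPMap.map_zero]
      have e4 : T ⟨T† ⟨_, a2⟩, a4⟩ = ((T₁ a : V₂) : H) := by
        rw [show (⟨T† ⟨_, a2⟩, a4⟩ : T.domain) = ⟨_, haT⟩ from Subtype.ext e2]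
        exact (hT₁.2 a a.2 haT).symm
      rw [e3, e4]
      simp
    have hcQ : ∃ y : Q.domain, (y : V₂) + Q y = q := by
      have hcm' : T₂ c ∈ (T₂†).domain := by simpa using hcm
      have hce' : T₂† ⟨T₂ c, hcm'⟩ = q - c := by
        rw [← hce]; congr 1; exact Subtype.ext (sub_zero _).symm
      have hcK : (c : V₂) ∈ Kᗮ := by
        have h1 : (c : V₂) = q - T₂† ⟨T₂ c, hcm'⟩ := by rw [hce']; abel
        rw [h1]
        refine sub_mem hq ?_
        rw [Submodule.mem_orthogonal']
        intro w hw
        obtain ⟨k1, k2⟩ := (hKmem w).1 hw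
        have := LinearPMap.adjoint_isFormalAdjoint hT₂d ⟨T₂ c, hcm'⟩ ⟨w, k1⟩
        simp only at this
        rw [this, k2, inner_zero_right]
      have hkey : ∀ w : T₁.domain, inner ℂ (0 : V₁) (w : V₁) = inner ℂ (c : V₂) (T₁ w) := by
        intro w
        rw [inner_zero_left]
        exact (K.inner_left_of_mem_orthogonal (hTK w) hcK).symm
      have hm : (c : V₂) ∈ (T₁†).domain := LinearPMap.mem_adjoint_domain_of_exists _ ⟨0, hkey⟩
      have hme : T₁† ⟨c, hm⟩ = 0 := LinearPMap.adjoint_apply_eq hT₁d _ hkey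
      subst hadj₁
      subst hadj₂
      have a1 := (hT₂.1 _).1 c.2
      have a2 := (hS₂.1 _).1 hm
      have e1 : T ⟨_, a1⟩ = ((T₂ c : V₃) : H) := (hT₂.2 _ c.2 a1).symm
      have e2 : T† ⟨_, a2⟩ = 0 := by rw [← hS₂.2 _ hm a2, hme]; rfl
      have haT := (hS₃.1 _).1 hcm'
      have a3 : T ⟨_, a1⟩ ∈ (T†).domain := by rw [e1]; exact haT
      have a4 : T† ⟨_, a2⟩ ∈ T.domain := by rw [e2]; exact zero_mem _
      have hPd := (hPdom _).2 ⟨a1, a2, a3, a4⟩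
      refine ⟨⟨c, (hQ.1 _).2 hPd⟩, Subtype.ext ?_⟩
      rw [Submodule.coe_add, hQ.2 _ _ hPd, hPval _ hPd a1 a2 a3 a4]
      have e3 : T ⟨T† ⟨_, a2⟩, a4⟩ = 0 := by
        rw [show (⟨T† ⟨_, a2⟩, a4⟩ : T.domain) = 0 from Subtype.ext e2, LinearPMap.map_zero]
      have e4 : T† ⟨T ⟨_, a1⟩, a3⟩ = ((q - c : V₂) : H) := by
        rw [show (⟨T ⟨_, a1⟩, a3⟩ : (T†).domain) = ⟨_, haT⟩ from Subtype.ext e1, ← hce']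
        exact (hS₃.2 _ hcm' haT).symm
      rw [e3, e4]
      simp
    obtain ⟨y1, h1⟩ := hbP
    obtain ⟨y2, h2⟩ := hcQ
    refine ⟨y1 + y2, ?_⟩
    rw [LinearPMap.map_add, hpq, ← h1, ← h2, Submodule.coe_add]
    abel
  refine aux_compact N (LinearMap.range Q.toFun) (fun t u =>
    ∃ (h1 : (u : H) ∈ T.domain) (h2 : (u : H) ∈ (T†).domain),
        u ∈ LinearMap.range Q.toFun ∧
          ‖T ⟨(u : H), h1⟩‖ ^ 2 + ‖T† ⟨(u : H), h2⟩‖ ^ 2 ≤ t) ?_ ?_ ?_ ?_ ?_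
  · rintro t u ⟨b1, b2, hR, ht⟩
    obtain ⟨hd, -, hQN⟩ := hNR u hR
    obtain ⟨a1, a2, hf⟩ := hform _ hd
    have f1 := hf u b1 b2
    have f2 := hf _ a1 a2
    rw [hQN] at f1 f2
    have g2 : ‖T ⟨_, a1⟩‖ ^ 2 + ‖T† ⟨_, a2⟩‖ ^ 2 ≤ ‖u‖ * ‖N u‖ := by
      refine le_trans (le_of_eq ?_) (re_inner_le_norm (𝕜 := ℂ) u (N u))
      rw [f2, map_add, inner_self_eq_norm_sq, inner_self_eq_norm_sq]
    have g1 : ‖u‖ ^ 2 ≤ ‖T ⟨_, a1⟩‖ * ‖T ⟨_, b1⟩‖ + ‖T† ⟨_, a2⟩‖ * ‖T† ⟨_, b2⟩‖ := by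
      rw [← inner_self_eq_norm_sq (𝕜 := ℂ) u, f1, map_add]
      exact add_le_add (re_inner_le_norm _ _) (re_inner_le_norm _ _)
    generalize ‖T ⟨_, a1⟩‖ = A at *
    generalize ‖T† ⟨_, a2⟩‖ = B at *
    generalize ‖T ⟨_, b1⟩‖ = C at *
    generalize ‖T† ⟨_, b2⟩‖ = D at *
    have hu := norm_nonneg u
    have hNu := norm_nonneg (N u)
    generalize ‖u‖ = r at *
    generalize ‖N u‖ = s at *
    have h8 : (r ^ 2) ^ 2 ≤ (r * s) * t := by
      calc (r ^ 2) ^ 2 ≤ (A * C + B * D) ^ 2 := by gcongr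
        _ ≤ (A ^ 2 + B ^ 2) * (C ^ 2 + D ^ 2) := by nlinarith [sq_nonneg (A * D - B * C)]
        _ ≤ (r * s) * t := by gcongr
    have ht0 : 0 ≤ t := by nlinarith [sq_nonneg C, sq_nonneg D]
    rcases hu.eq_or_lt with h0 | h0
    · rw [← h0]; simp only [ne_eq, OfNat.ofNat_ne_zero, not_false_eq_true, zero_pow]; positivity
    · refine le_of_mul_le_mul_left ?_ h0
      nlinarith
  · intro u hR
    obtain ⟨hd, hNRu, hQN⟩ := hNR u hR
    obtain ⟨a1, a2, hf⟩ := hform _ hd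
    have f2 := hf _ a1 a2
    rw [hQN] at f2
    refine ⟨a1, a2, hNRu, ?_⟩
    refine le_trans (le_of_eq ?_) (re_inner_le_norm (𝕜 := ℂ) u (N u))
    rw [f2, map_add, inner_self_eq_norm_sq, inner_self_eq_norm_sq]
  · rintro u v ⟨a1, a2, a3, a4⟩ ⟨b1, b2, b3, b4⟩
    refine ⟨sub_mem a1 b1, sub_mem a2 b2, sub_mem a3 b3, ?_⟩
    have e1 : T ⟨((u - v : V₂) : H), sub_mem a1 b1⟩ = T ⟨u, a1⟩ - T ⟨v, b1⟩ :=
      LinearPMap.map_sub T ⟨u, a1⟩ ⟨v, b1⟩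
    have e2 : T† ⟨((u - v : V₂) : H), sub_mem a2 b2⟩ = T† ⟨u, a2⟩ - T† ⟨v, b2⟩ :=
      LinearPMap.map_sub (T†) ⟨u, a2⟩ ⟨v, b2⟩
    rw [e1, e2]
    have n1 := norm_sub_le (T ⟨u, a1⟩) (T ⟨v, b1⟩)
    have n2 := norm_sub_le (T† ⟨u, a2⟩) (T† ⟨v, b2⟩)
    have m1 := pow_le_pow_left₀ (norm_nonneg _) n1 2
    have m2 := pow_le_pow_left₀ (norm_nonneg _) n2 2
    nlinarith [sq_nonneg (‖T ⟨u, a1⟩‖ - ‖T ⟨v, b1⟩‖), sq_nonneg (‖T† ⟨u, a2⟩‖ - ‖T† ⟨v, b2⟩‖)]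
  · rintro t u c hc htc ⟨a1, a2, a3, a4⟩
    have b1 : (((c : ℂ)⁻¹ • u : V₂) : H) ∈ T.domain := T.domain.smul_mem _ a1
    have b2 : (((c : ℂ)⁻¹ • u : V₂) : H) ∈ (T†).domain := (T†).domain.smul_mem _ a2
    refine ⟨b1, b2, Submodule.smul_mem _ _ a3, ?_⟩
    have e1 : T ⟨_, b1⟩ = (c : ℂ)⁻¹ • T ⟨u, a1⟩ := LinearPMap.map_smul T _ ⟨u, a1⟩
    have e2 : T† ⟨_, b2⟩ = (c : ℂ)⁻¹ • T† ⟨u, a2⟩ := LinearPMap.map_smul (T†) _ ⟨u, a2⟩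
    rw [e1, e2, norm_smul, norm_smul, norm_inv, Complex.norm_real, Real.norm_of_nonneg hc.le,
      mul_pow, mul_pow, ← mul_add, inv_pow, inv_mul_le_iff₀ (by positivity)]
    linarith
  · intro x hx
    obtain ⟨y, hy⟩ := hsurj x
    obtain ⟨a1, a2, hf⟩ := hform _ y.2
    have f2 := hf _ a1 a2
    have h0 : inner ℂ (Q y) x = 0 := hx _ ⟨y, rfl⟩
    rw [← hy, inner_add_right] at h0
    have h1 := congrArg (RCLike.re (K := ℂ)) h0
    change inner ℂ (Q y) (y : V₂) = _ at f2
    rw [f2, map_add, map_add, inner_self_eq_norm_sq, inner_self_eq_norm_sq,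
      inner_self_eq_norm_sq, map_zero] at h1
    have h2 : ‖Q y‖ ^ 2 = 0 := by
      nlinarith [sq_nonneg ‖T ⟨_, a1⟩‖, sq_nonneg ‖T† ⟨_, a2⟩‖, sq_nonneg ‖Q y‖]
    have h3 : Q y = 0 := by simpa using h2
    rw [h3, add_zero] at hy
    exact hN0 x ⟨y, h3, hy⟩
end

section
/- Suppose there exist bounded linear operators T_q : V₂ → V₁ and T_{q+1} : V₃ → V₂ such that T_q maps into Dom T ∩ V₁ with T(T_q f) = f for every f ∈ T(Dom T ∩ V₁), and T_{q+1} maps into Dom T ∩ V₂ with T(T_{q+1} g) = g for every g ∈ T(Dom T ∩ V₂). Let Π₁ : V₂ → V₂ be the orthogonal projection onto T(Dom T ∩ V₁), Π₂ : V₃ → V₃ the orthogonal projection onto T(Dom T ∩ V₂), Pr₁ : V₁ → V₁ the orthogonal projection onto (ker T ∩ V₁)ᗮ ∩ V₁, and Pr₂ : V₂ → V₂ the orthogonal projection onto (ker T ∩ V₂)ᗮ ∩ V₂, and set K_q = Pr₁ ∘ T_q ∘ Π₁ and K_{q+1} = Pr₂ ∘ T_{q+1} ∘ Π₂. Then the Green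 operator satisfies N = K_q* K_q + K_{q+1} K_{q+1}*; in particular, if T_q and T_{q+1} are compact, then N is compact. -/
open scoped LinearPMap

theorem stmt_11 {H : Type*} [NormedAddCommGroup H] [InnerProductSpace ℂ H] [CompleteSpace H]
    -- `T` is closed and densely defined, with range contained in `Dom T` and `T² = 0`
    (T : H →ₗ.[ℂ] H) (hTd : Dense (T.domain : Set H)) (hTc : T.IsClosed)
    (hTr : ∀ u : T.domain, T u ∈ T.domain)
    (hT2 : ∀ u : T.domain, T ⟨T u, hTr u⟩ = 0)
    -- `P = T*T + TT*` with its natural domain; `P` is self-adjoint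
    (P : H →ₗ.[ℂ] H)
    (hPdom : ∀ x : H, x ∈ P.domain ↔
      ∃ (h1 : x ∈ T.domain) (h2 : x ∈ (T†).domain),
        T ⟨x, h1⟩ ∈ (T†).domain ∧ T† ⟨x, h2⟩ ∈ T.domain)
    (hPval : ∀ (x : H) (hx : x ∈ P.domain) (h1 : x ∈ T.domain) (h2 : x ∈ (T†).domain)
      (h3 : T ⟨x, h1⟩ ∈ (T†).domain) (h4 : T† ⟨x, h2⟩ ∈ T.domain),
      P ⟨x, hx⟩ = T† ⟨T ⟨x, h1⟩, h3⟩ + T ⟨T† ⟨x, h2⟩, h4⟩)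
    (hPsa : IsSelfAdjoint P)
    -- the closed subspaces `V₁, V₂, V₃`
    (V₁ V₂ V₃ : Submodule ℂ H)
    (hV₁ : IsClosed (V₁ : Set H)) (hV₂ : IsClosed (V₂ : Set H)) (hV₃ : IsClosed (V₃ : Set H))
    [CompleteSpace V₁] [CompleteSpace V₂] [CompleteSpace V₃]
    -- `T₁ = T|_{V₁} : V₁ ⇀ V₂` and `T₂ = T|_{V₂} : V₂ ⇀ V₃`, densely defined with closed range
    (T₁ : ↥V₁ →ₗ.[ℂ] ↥V₂) (hT₁ : IsRestrictionOf T V₁ V₂ T₁)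
    (hT₁d : Dense (T₁.domain : Set V₁))
    (T₂ : ↥V₂ →ₗ.[ℂ] ↥V₃) (hT₂ : IsRestrictionOf T V₂ V₃ T₂)
    (hT₂d : Dense (T₂.domain : Set V₂))
    (hR₁ : IsClosed ((LinearMap.range T₁.toFun : Submodule ℂ V₂) : Set V₂))
    (hR₂ : IsClosed ((LinearMap.range T₂.toFun : Submodule ℂ V₃) : Set V₃))
    -- `S₂ = T*|_{V₂} : V₂ ⇀ V₁` and `S₃ = T*|_{V₃} : V₃ ⇀ V₂`; the adjoint of `T|_{V₁}` is
    -- `T*|_{V₂}` and the adjoint of `T|_{V₂}` is `T*|_{V₃}`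
    (S₂ : ↥V₂ →ₗ.[ℂ] ↥V₁) (hS₂ : IsRestrictionOf (T†) V₂ V₁ S₂)
    (S₃ : ↥V₃ →ₗ.[ℂ] ↥V₂) (hS₃ : IsRestrictionOf (T†) V₃ V₂ S₃)
    (hadj₁ : T₁† = S₂) (hadj₂ : T₂† = S₃)
    -- `Q = P|_{V₂}`
    (Q : ↥V₂ →ₗ.[ℂ] ↥V₂) (hQ : IsRestrictionOf P V₂ V₂ Q)
    -- `N = Q⁻¹` is the Green operator
    (N : V₂ →L[ℂ] V₂)
    (hN0 : ∀ u ∈ (LinearMap.ker Q.toFun).map Q.domain.subtype, N u = 0)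
    (hNR : ∀ u ∈ LinearMap.range Q.toFun, ∃ h : N u ∈ Q.domain,
      N u ∈ LinearMap.range Q.toFun ∧ Q ⟨N u, h⟩ = u)
    -- `T_q : V₂ → V₁` is a bounded solution operator on `T(Dom T ∩ V₁)`
    (Tq : V₂ →L[ℂ] V₁) (hTqdom : ∀ f : V₂, Tq f ∈ T₁.domain)
    (hTqsol : ∀ f ∈ LinearMap.range T₁.toFun, T₁ ⟨Tq f, hTqdom f⟩ = f)
    -- `T_{q+1} : V₃ → V₂` is a bounded solution operator on `T(Dom T ∩ V₂)`
    (Tq1 : V₃ →L[ℂ] V₂) (hTq1dom : ∀ g : V₃, Tq1 g ∈ T₂.domain)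
    (hTq1sol : ∀ g ∈ LinearMap.range T₂.toFun, T₂ ⟨Tq1 g, hTq1dom g⟩ = g)
    -- `Π₁ : V₂ → V₂` is the orthogonal projection onto `T(Dom T ∩ V₁)`
    (Pi1 : V₂ →L[ℂ] V₂)
    (hPi1 : ∀ u : V₂, Pi1 u ∈ LinearMap.range T₁.toFun ∧
      u - Pi1 u ∈ (LinearMap.range T₁.toFun)ᗮ)
    -- `Π₂ : V₃ → V₃` is the orthogonal projection onto `T(Dom T ∩ V₂)`
    (Pi2 : V₃ →L[ℂ] V₃)
    (hPi2 : ∀ u : V₃, Pi2 u ∈ LinearMap.range T₂.toFun ∧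
      u - Pi2 u ∈ (LinearMap.range T₂.toFun)ᗮ)
    -- `Pr₁ : V₁ → V₁` is the orthogonal projection onto `(ker T ∩ V₁)ᗮ ∩ V₁`
    (Pr1 : V₁ →L[ℂ] V₁)
    (hPr1 : ∀ u : V₁, Pr1 u ∈ ((LinearMap.ker T₁.toFun).map T₁.domain.subtype)ᗮ ∧
      u - Pr1 u ∈ (LinearMap.ker T₁.toFun).map T₁.domain.subtype)
    -- `Pr₂ : V₂ → V₂` is the orthogonal projection onto `(ker T ∩ V₂)ᗮ ∩ V₂`
    (Pr2 : V₂ →L[ℂ] V₂)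
    (hPr2 : ∀ u : V₂, Pr2 u ∈ ((LinearMap.ker T₂.toFun).map T₂.domain.subtype)ᗮ ∧
      u - Pr2 u ∈ (LinearMap.ker T₂.toFun).map T₂.domain.subtype) :
    -- with `K_q = Pr₁ ∘ T_q ∘ Π₁` and `K_{q+1} = Pr₂ ∘ T_{q+1} ∘ Π₂` one has
    -- `N = K_q* K_q + K_{q+1} K_{q+1}*`; if `T_q, T_{q+1}` are compact then `N` is compact
    N = (ContinuousLinearMap.adjoint (Pr1.comp (Tq.comp Pi1))).comp (Pr1.comp (Tq.comp Pi1)) +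
        (Pr2.comp (Tq1.comp Pi2)).comp
          (ContinuousLinearMap.adjoint (Pr2.comp (Tq1.comp Pi2))) ∧
    (IsCompactOperator (⇑Tq : V₂ → V₁) → IsCompactOperator (⇑Tq1 : V₃ → V₂) →
      IsCompactOperator (⇑N : V₂ → V₂)) := by
  classical
  -- adjoint facts
  have hS₂mk : ∀ (y : V₂) (w : V₁), (∀ x : T₁.domain, inner ℂ w (x : V₁) = inner ℂ y (T₁ x)) →
      ∃ h : y ∈ S₂.domain, S₂ ⟨y, h⟩ = w := by
    intro y w h
    subst hadj₁
    have hd := LinearPMap.mem_adjoint_domain_of_exists (T := T₁) y ⟨w, h⟩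
    exact ⟨hd, LinearPMap.adjoint_apply_eq hT₁d ⟨y, hd⟩ h⟩
  have hS₃mk : ∀ (y : V₃) (w : V₂), (∀ x : T₂.domain, inner ℂ w (x : V₂) = inner ℂ y (T₂ x)) →
      ∃ h : y ∈ S₃.domain, S₃ ⟨y, h⟩ = w := by
    intro y w h
    subst hadj₂
    have hd := LinearPMap.mem_adjoint_domain_of_exists (T := T₂) y ⟨w, h⟩
    exact ⟨hd, LinearPMap.adjoint_apply_eq hT₂d ⟨y, hd⟩ h⟩
  have hQmk : ∀ (v : V₂) (z : V₃) (b : V₂) (w : V₁) (a : V₂),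
      (∃ h : v ∈ T₂.domain, T₂ ⟨v, h⟩ = z) → (∃ h : z ∈ S₃.domain, S₃ ⟨z, h⟩ = b) →
      (∃ h : v ∈ S₂.domain, S₂ ⟨v, h⟩ = w) → (∃ h : w ∈ T₁.domain, T₁ ⟨w, h⟩ = a) →
      ∃ h : v ∈ Q.domain, Q ⟨v, h⟩ = b + a := by
    rintro v z b w a ⟨h1, rfl⟩ ⟨h2, rfl⟩ ⟨h3, rfl⟩ ⟨h4, rfl⟩
    have g1 := (hT₂.1 _).1 h1
    have e1 := hT₂.2 _ h1 g1
    have g2 := (hS₃.1 _).1 h2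
    have e2 := hS₃.2 _ h2 g2
    have g3 := (hS₂.1 _).1 h3
    have e3 := hS₂.2 _ h3 g3
    have g4 := (hT₁.1 _).1 h4
    have e4 := hT₁.2 _ h4 g4
    have g2' : T ⟨(v : H), g1⟩ ∈ (T†).domain := e1 ▸ g2
    have g4' : T† ⟨(v : H), g3⟩ ∈ T.domain := e3 ▸ g4
    have hP : (v : H) ∈ P.domain := (hPdom _).2 ⟨g1, g3, g2', g4'⟩
    have hq : v ∈ Q.domain := (hQ.1 v).2 hP
    refine ⟨hq, Subtype.ext ?_⟩
    rw [hQ.2 v hq hP, hPval _ hP g1 g3 g2' g4', Submodule.coe_add, e2, e4]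
    have q1 : (⟨T ⟨(v : H), g1⟩, g2'⟩ : (T†).domain) = ⟨_, g2⟩ := Subtype.ext e1.symm
    have q2 : (⟨T† ⟨(v : H), g3⟩, g4'⟩ : T.domain) = ⟨_, g4⟩ := Subtype.ext e3.symm
    rw [q1, q2]
  have hQsym : ∀ x y : Q.domain, (inner ℂ (Q x) (y : V₂) : ℂ) = inner ℂ (x : V₂) (Q y) := by
    rintro ⟨x, hx⟩ ⟨y, hy⟩
    have px := (hQ.1 x).1 hx
    have py := (hQ.1 y).1 hy
    have hf := LinearPMap.adjoint_isFormalAdjoint hPsa.dense_domain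
    rw [LinearPMap.isSelfAdjoint_def.1 hPsa] at hf
    have := hf ⟨x, px⟩ ⟨y, py⟩
    rw [Submodule.coe_inner, Submodule.coe_inner, hQ.2 x hx px, hQ.2 y hy py]
    exact this
  have hU : ∀ (a v : V₂), (∃ h : v ∈ Q.domain, Q ⟨v, h⟩ = a) →
      (∃ x, ∃ h : x ∈ Q.domain, Q ⟨x, h⟩ = v) → N a = v := by
    rintro a v ⟨h, ha⟩ ⟨x, hx, hv⟩
    obtain ⟨h', ⟨⟨x', hx'⟩, hv'⟩, ha'⟩ := hNR a ⟨⟨v, h⟩, ha⟩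
    have hv'' : Q ⟨x', hx'⟩ = N a := hv'
    have k1 : Q (⟨N a, h'⟩ - ⟨v, h⟩) = 0 := by rw [LinearPMap.map_sub, ha, ha', sub_self]
    have k2 : Q (⟨x', hx'⟩ - ⟨x, hx⟩) = N a - v := by rw [LinearPMap.map_sub, hv, hv'']
    have k3 := hQsym (⟨x', hx'⟩ - ⟨x, hx⟩) (⟨N a, h'⟩ - ⟨v, h⟩)
    rw [k1, k2, inner_zero_right] at k3
    exact sub_eq_zero.1 (inner_self_eq_zero.1 k3)
  -- R(T₁) ⊆ ker T₂
  have hRK : ∀ a ∈ LinearMap.range T₁.toFun,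
      a ∈ (LinearMap.ker T₂.toFun).map T₂.domain.subtype := by
    rintro a ⟨⟨x, hx⟩, ha⟩
    have ha : T₁ ⟨x, hx⟩ = a := ha
    have gx := (hT₁.1 _).1 hx
    have e := hT₁.2 x hx gx
    rw [ha] at e
    have ga : (a : H) ∈ T.domain := e ▸ hTr ⟨x, gx⟩
    have da := (hT₂.1 _).2 ga
    refine ⟨⟨a, da⟩, ?_, rfl⟩
    refine LinearMap.mem_ker.2 (Subtype.ext ?_)
    refine (hT₂.2 a da ga).trans ?_
    rw [Submodule.coe_zero, ← hT2 ⟨x, gx⟩]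
    congr 1
    exact Subtype.ext e
  have hker2 : ∀ u ∈ (LinearMap.ker T₂.toFun).map T₂.domain.subtype,
      ∃ h : u ∈ T₂.domain, T₂ ⟨u, h⟩ = 0 := by
    rintro _ ⟨⟨u, hu⟩, h0, rfl⟩
    exact ⟨hu, h0⟩
  have hker1 : ∀ u ∈ (LinearMap.ker T₁.toFun).map T₁.domain.subtype,
      ∃ h : u ∈ T₁.domain, T₁ ⟨u, h⟩ = 0 := by
    rintro _ ⟨⟨u, hu⟩, h0, rfl⟩
    exact ⟨hu, h0⟩
  have hS₂0 : ∀ u ∈ (LinearMap.range T₁.toFun)ᗮ, ∃ h : u ∈ S₂.domain, S₂ ⟨u, h⟩ = 0 := by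
    intro u hu
    refine hS₂mk u 0 fun x => ?_
    rw [inner_zero_left]
    exact ((Submodule.mem_orthogonal' _ _).1 hu _ ⟨x, rfl⟩).symm
  have hKR : ∀ u ∈ ((LinearMap.ker T₂.toFun).map T₂.domain.subtype)ᗮ,
      u ∈ (LinearMap.range T₁.toFun)ᗮ := by
    intro u hu
    rw [Submodule.mem_orthogonal] at hu ⊢
    exact fun a ha => hu a (hRK a ha)
  have z1 : ∃ h : (0 : V₁) ∈ T₁.domain, T₁ ⟨0, h⟩ = 0 := ⟨T₁.domain.zero_mem, T₁.map_zero⟩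
  have z3 : ∃ h : (0 : V₃) ∈ S₃.domain, S₃ ⟨0, h⟩ = 0 := ⟨S₃.domain.zero_mem, S₃.map_zero⟩
  -- projections
  have hPi1id : ∀ a ∈ LinearMap.range T₁.toFun, Pi1 a = a := by
    intro a ha
    have h1 : a - Pi1 a ∈ LinearMap.range T₁.toFun := Submodule.sub_mem _ ha (hPi1 a).1
    exact (sub_eq_zero.1 (inner_self_eq_zero.1
      ((Submodule.mem_orthogonal _ _).1 (hPi1 a).2 _ h1))).symm
  have hPi2id : ∀ a ∈ LinearMap.range T₂.toFun, Pi2 a = a := by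
    intro a ha
    have h1 : a - Pi2 a ∈ LinearMap.range T₂.toFun := Submodule.sub_mem _ ha (hPi2 a).1
    exact (sub_eq_zero.1 (inner_self_eq_zero.1
      ((Submodule.mem_orthogonal _ _).1 (hPi2 a).2 _ h1))).symm
  have hPi1z : ∀ a ∈ (LinearMap.range T₁.toFun)ᗮ, Pi1 a = 0 := by
    intro a ha
    have h1 : a - (a - Pi1 a) ∈ (LinearMap.range T₁.toFun)ᗮ := Submodule.sub_mem _ ha (hPi1 a).2
    rw [sub_sub_cancel] at h1
    exact inner_self_eq_zero.1 ((Submodule.mem_orthogonal _ _).1 h1 _ (hPi1 a).1)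
  have hPi2z : ∀ a ∈ (LinearMap.range T₂.toFun)ᗮ, Pi2 a = 0 := by
    intro a ha
    have h1 : a - (a - Pi2 a) ∈ (LinearMap.range T₂.toFun)ᗮ := Submodule.sub_mem _ ha (hPi2 a).2
    rw [sub_sub_cancel] at h1
    exact inner_self_eq_zero.1 ((Submodule.mem_orthogonal _ _).1 h1 _ (hPi2 a).1)
  -- K operators
  obtain ⟨K1, hK1⟩ : ∃ K, K = Pr1.comp (Tq.comp Pi1) := ⟨_, rfl⟩
  obtain ⟨K2, hK2⟩ : ∃ K, K = Pr2.comp (Tq1.comp Pi2) := ⟨_, rfl⟩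
  have hK1app : ∀ x, K1 x = Pr1 (Tq (Pi1 x)) := fun x => by rw [hK1]; rfl
  have hK2app : ∀ x, K2 x = Pr2 (Tq1 (Pi2 x)) := fun x => by rw [hK2]; rfl
  have hK1z : ∀ a ∈ (LinearMap.range T₁.toFun)ᗮ, K1 a = 0 := fun a ha => by
    rw [hK1app, hPi1z a ha, map_zero, map_zero]
  have hK2z : ∀ a ∈ (LinearMap.range T₂.toFun)ᗮ, K2 a = 0 := fun a ha => by
    rw [hK2app, hPi2z a ha, map_zero, map_zero]
  have hK1T : ∀ a ∈ LinearMap.range T₁.toFun, ∃ h : K1 a ∈ T₁.domain, T₁ ⟨K1 a, h⟩ = a := by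
    intro a ha
    obtain ⟨h, h0⟩ := hker1 _ (hPr1 (Tq a)).2
    have e : K1 a = Tq a - (Tq a - Pr1 (Tq a)) := by rw [hK1app, hPi1id a ha, sub_sub_cancel]
    rw [e]
    refine ⟨Submodule.sub_mem _ (hTqdom a) h, ?_⟩
    have := T₁.map_sub ⟨Tq a, hTqdom a⟩ ⟨_, h⟩
    rw [h0, hTqsol a ha, sub_zero] at this
    exact this
  have hK2T : ∀ a ∈ LinearMap.range T₂.toFun, ∃ h : K2 a ∈ T₂.domain, T₂ ⟨K2 a, h⟩ = a := by
    intro a ha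
    obtain ⟨h, h0⟩ := hker2 _ (hPr2 (Tq1 a)).2
    have e : K2 a = Tq1 a - (Tq1 a - Pr2 (Tq1 a)) := by rw [hK2app, hPi2id a ha, sub_sub_cancel]
    rw [e]
    refine ⟨Submodule.sub_mem _ (hTq1dom a) h, ?_⟩
    have := T₂.map_sub ⟨Tq1 a, hTq1dom a⟩ ⟨_, h⟩
    rw [h0, hTq1sol a ha, sub_zero] at this
    exact this
  have hK1o : ∀ x, K1 x ∈ ((LinearMap.ker T₁.toFun).map T₁.domain.subtype)ᗮ := fun x => by
    rw [hK1app]; exact (hPr1 _).1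
  have hK2o : ∀ x, K2 x ∈ ((LinearMap.ker T₂.toFun).map T₂.domain.subtype)ᗮ := fun x => by
    rw [hK2app]; exact (hPr2 _).1
  have hS₂K : ∀ w ∈ ((LinearMap.ker T₁.toFun).map T₁.domain.subtype)ᗮ,
      ∃ h : (ContinuousLinearMap.adjoint K1) w ∈ S₂.domain, S₂ ⟨_, h⟩ = w := by
    intro w hw
    refine hS₂mk _ _ fun x => ?_
    rw [ContinuousLinearMap.adjoint_inner_left]
    obtain ⟨h, h'⟩ := hK1T (T₁ x) ⟨x, rfl⟩
    have hk : (x : V₁) - K1 (T₁ x) ∈ (LinearMap.ker T₁.toFun).map T₁.domain.subtype := by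
      refine ⟨x - ⟨_, h⟩, ?_, rfl⟩
      refine LinearMap.mem_ker.2 ((T₁.map_sub x ⟨_, h⟩).trans ?_)
      rw [h', sub_self]
    have := (Submodule.mem_orthogonal' _ _).1 hw _ hk
    rw [inner_sub_right] at this
    exact sub_eq_zero.1 this
  have hS₃K : ∀ w ∈ ((LinearMap.ker T₂.toFun).map T₂.domain.subtype)ᗮ,
      ∃ h : (ContinuousLinearMap.adjoint K2) w ∈ S₃.domain, S₃ ⟨_, h⟩ = w := by
    intro w hw
    refine hS₃mk _ _ fun x => ?_
    rw [ContinuousLinearMap.adjoint_inner_left]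
    obtain ⟨h, h'⟩ := hK2T (T₂ x) ⟨x, rfl⟩
    have hk : (x : V₂) - K2 (T₂ x) ∈ (LinearMap.ker T₂.toFun).map T₂.domain.subtype := by
      refine ⟨x - ⟨_, h⟩, ?_, rfl⟩
      refine LinearMap.mem_ker.2 ((T₂.map_sub x ⟨_, h⟩).trans ?_)
      rw [h', sub_self]
    have := (Submodule.mem_orthogonal' _ _).1 hw _ hk
    rw [inner_sub_right] at this
    exact sub_eq_zero.1 this
  have hK1R : ∀ w, (ContinuousLinearMap.adjoint K1) w ∈ LinearMap.range T₁.toFun := by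
    intro w
    obtain ⟨h1, h2⟩ := hPi1 ((ContinuousLinearMap.adjoint K1) w)
    have h3 : (inner ℂ ((ContinuousLinearMap.adjoint K1) w -
        Pi1 ((ContinuousLinearMap.adjoint K1) w)) ((ContinuousLinearMap.adjoint K1) w -
        Pi1 ((ContinuousLinearMap.adjoint K1) w)) : ℂ) = 0 := by
      conv_lhs => rw [inner_sub_left]
      rw [ContinuousLinearMap.adjoint_inner_left, hK1z _ h2, inner_zero_right,
        (Submodule.mem_orthogonal _ _).1 h2 _ h1, sub_zero]
    rw [sub_eq_zero.1 (inner_self_eq_zero.1 h3)]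
    exact h1
  have hK2R : ∀ w, (ContinuousLinearMap.adjoint K2) w ∈ LinearMap.range T₂.toFun := by
    intro w
    obtain ⟨h1, h2⟩ := hPi2 ((ContinuousLinearMap.adjoint K2) w)
    have h3 : (inner ℂ ((ContinuousLinearMap.adjoint K2) w -
        Pi2 ((ContinuousLinearMap.adjoint K2) w)) ((ContinuousLinearMap.adjoint K2) w -
        Pi2 ((ContinuousLinearMap.adjoint K2) w)) : ℂ) = 0 := by
      conv_lhs => rw [inner_sub_left]
      rw [ContinuousLinearMap.adjoint_inner_left, hK2z _ h2, inner_zero_right,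
        (Submodule.mem_orthogonal _ _).1 h2 _ h1, sub_zero]
    rw [sub_eq_zero.1 (inner_self_eq_zero.1 h3)]
    exact h1
  have hK2az : ∀ u ∈ (LinearMap.ker T₂.toFun).map T₂.domain.subtype,
      (ContinuousLinearMap.adjoint K2) u = 0 := by
    intro u hu
    refine (inner_self_eq_zero (𝕜 := ℂ)).1 ?_
    rw [ContinuousLinearMap.adjoint_inner_left]
    exact (Submodule.mem_orthogonal _ _).1 (hK2o _) _ hu
  have hQ1 : ∀ a ∈ LinearMap.range T₁.toFun,
      ∃ h : (ContinuousLinearMap.adjoint K1) (K1 a) ∈ Q.domain, Q ⟨_, h⟩ = a := by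
    intro a ha
    have := hQmk _ 0 0 (K1 a) a (hker2 _ (hRK _ (hK1R (K1 a)))) z3 (hS₂K _ (hK1o a)) (hK1T a ha)
    rwa [zero_add] at this
  have hQ2 : ∀ b ∈ ((LinearMap.ker T₂.toFun).map T₂.domain.subtype)ᗮ,
      ∃ h : K2 ((ContinuousLinearMap.adjoint K2) b) ∈ Q.domain, Q ⟨_, h⟩ = b := by
    intro b hb
    have := hQmk _ _ b 0 0 (hK2T _ (hK2R b)) (hS₃K _ hb) (hS₂0 _ (hKR _ (hK2o _))) z1
    rwa [add_zero] at this
  have hmain : N = (ContinuousLinearMap.adjoint K1).comp K1 +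
      K2.comp (ContinuousLinearMap.adjoint K2) := by
    ext1 u
    have ha := (hPi1 u).1
    have hb := (hPr2 u).1
    have hh1 : u - Pi1 u - Pr2 u ∈ (LinearMap.range T₁.toFun)ᗮ :=
      Submodule.sub_mem _ (hPi1 u).2 (hKR _ hb)
    have hh2 : u - Pi1 u - Pr2 u ∈ (LinearMap.ker T₂.toFun).map T₂.domain.subtype := by
      rw [sub_right_comm]
      exact Submodule.sub_mem _ (hPr2 u).2 (hRK _ ha)
    obtain ⟨hd, h0⟩ := hQmk _ 0 0 0 0 (hker2 _ hh2) z3 (hS₂0 _ hh1) z1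
    rw [add_zero] at h0
    have n1 : N (u - Pi1 u - Pr2 u) = 0 := hN0 _ ⟨⟨_, hd⟩, h0, rfl⟩
    have n2 := hU _ _ (hQ1 _ ha) ⟨_, hQ1 _ (hK1R _)⟩
    have n3 := hU _ _ (hQ2 _ hb) ⟨_, hQ2 _ (hK2o _)⟩
    have m1 : K1 u = K1 (Pi1 u) := by
      rw [← sub_eq_zero, ← map_sub]; exact hK1z _ (hPi1 u).2
    have m2 : (ContinuousLinearMap.adjoint K2) u = (ContinuousLinearMap.adjoint K2) (Pr2 u) := by
      rw [← sub_eq_zero, ← map_sub]; exact hK2az _ (hPr2 u).2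
    have n4 : N u = N (Pi1 u) + N (Pr2 u) := by
      rw [map_sub, map_sub, sub_sub, sub_eq_zero] at n1
      exact n1
    change N u = (ContinuousLinearMap.adjoint K1) (K1 u) + K2 ((ContinuousLinearMap.adjoint K2) u)
    rw [n4, n2, n3, m1, m2]
  rw [← hK1, ← hK2]
  refine ⟨hmain, fun c1 c2 => ?_⟩
  have d1 : IsCompactOperator K1 := by
    rw [hK1]
    exact (c1.comp_clm Pi1).clm_comp Pr1
  have d2 : IsCompactOperator K2 := by
    rw [hK2]
    exact (c2.comp_clm Pi2).clm_comp Pr2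
  rw [hmain]
  exact (d1.clm_comp (ContinuousLinearMap.adjoint K1)).add
    (d2.comp_clm (ContinuousLinearMap.adjoint K2))
end

section
/- Let A be a closed, densely defined linear operator from a complex Hilbert space H₁ to a complex Hilbert space H₂ with closed range R(A). Let H ⊆ R(A) be a closed subspace of finite codimension in R(A), and let S : H → H₁ be a compact linear operator taking values in Dom A with A(Sf) = f for all f ∈ H. Then there exists a compact linear operator T : R(A) → H₁ taking values in Dom A with A(Tf) = f for all f ∈ R(A). -/
open scoped LinearPMap

/-- If `A` is a closed densely defined operator with closed range, `K` is a closed subspace of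
finite codimension in `R(A)`, and `S : K → H₁` is a compact solution operator for `A` on `K`,
then there is a compact solution operator for `A` on all of `R(A)`. -/
theorem stmt_12 {H₁ H₂ : Type*} [NormedAddCommGroup H₁] [InnerProductSpace ℂ H₁] [CompleteSpace H₁]
    [NormedAddCommGroup H₂] [InnerProductSpace ℂ H₂] [CompleteSpace H₂]
    (A : H₁ →ₗ.[ℂ] H₂) (hAd : Dense (A.domain : Set H₁)) (hAc : A.IsClosed)
    (hAr : IsClosed ((LinearMap.range A.toFun : Submodule ℂ H₂) : Set H₂))
    -- `K` is a closed subspace of finite codimension in `R(A)`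
    (K : Submodule ℂ H₂) (hK : K ≤ LinearMap.range A.toFun) (hKc : IsClosed (K : Set H₂))
    (hcodim : FiniteDimensional ℂ ↥(LinearMap.range A.toFun ⊓ Kᗮ))
    -- `S : K → H₁` is a compact solution operator on `K`
    (S : ↥K →ₗ[ℂ] H₁) (hScpt : IsCompactOperator (⇑S : K → H₁))
    (hSdom : ∀ f : K, S f ∈ A.domain)
    (hSsol : ∀ f : K, A ⟨S f, hSdom f⟩ = (f : H₂)) :
    ∃ Top : ↥(LinearMap.range A.toFun) →ₗ[ℂ] H₁,
      IsCompactOperator (⇑Top : LinearMap.range A.toFun → H₁) ∧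
      ∃ hdom : ∀ f : LinearMap.range A.toFun, Top f ∈ A.domain,
        ∀ f : LinearMap.range A.toFun, A ⟨Top f, hdom f⟩ = (f : H₂) := by
  obtain ⟨g, hg⟩ := A.toFun.rangeRestrict.exists_rightInverse_of_surjective
    (LinearMap.range_rangeRestrict _)
  have hg' : ∀ f : LinearMap.range A.toFun, A.toFun (g f) = (f : H₂) := fun f =>
    congrArg Subtype.val (LinearMap.congr_fun hg f)
  have : CompleteSpace K := hKc.completeSpace_coe
  let P : ↥(LinearMap.range A.toFun) →L[ℂ] K :=
    K.orthogonalProjectionOnto.comp (LinearMap.range A.toFun).subtypeL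
  let Q0 : ↥(LinearMap.range A.toFun) →L[ℂ] H₂ :=
    (LinearMap.range A.toFun).subtypeL - K.subtypeL.comp P
  have hQ0 : ∀ f, Q0 f ∈ LinearMap.range A.toFun ⊓ Kᗮ := fun f =>
    ⟨Submodule.sub_mem _ f.2 (hK (P f).2), K.sub_starProjection_mem_orthogonal (f : H₂)⟩
  let Q : ↥(LinearMap.range A.toFun) →L[ℂ] ↥(LinearMap.range A.toFun ⊓ Kᗮ) :=
    Q0.codRestrict _ hQ0
  let G : ↥(LinearMap.range A.toFun ⊓ Kᗮ) →ₗ[ℂ] A.domain :=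
    g ∘ₗ Submodule.inclusion inf_le_left
  let G' : ↥(LinearMap.range A.toFun ⊓ Kᗮ) →L[ℂ] H₁ :=
    LinearMap.toContinuousLinearMap (A.domain.subtype ∘ₗ G)
  have : ProperSpace ↥(LinearMap.range A.toFun ⊓ Kᗮ) := FiniteDimensional.proper ℂ _
  have hG' : IsCompactOperator G' := isCompactOperator_of_locallyCompactSpace_rng G'
  have hmem : ∀ f, S (P f) + G' (Q f) ∈ A.domain := fun f =>
    A.domain.add_mem (hSdom _) (G (Q f)).2
  refine ⟨S ∘ₗ P.toLinearMap + G'.toLinearMap ∘ₗ Q.toLinearMap,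
    (hScpt.comp_clm P).add (hG'.comp_clm Q), hmem, fun f => ?_⟩
  have h1 : (⟨S (P f) + G' (Q f), hmem f⟩ : A.domain) = ⟨S (P f), hSdom _⟩ + G (Q f) := rfl
  change A.toFun (⟨S (P f) + G' (Q f), hmem f⟩ : A.domain) = f
  rw [h1, map_add]
  have h2 : A.toFun ⟨S (P f), hSdom _⟩ = (P f : H₂) := hSsol (P f)
  have h3 : A.toFun (G (Q f)) = (f : H₂) - (P f : H₂) := hg' _
  rw [h2, h3]
  abel
end
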